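/- arXiv:2101.05686 — 10 statements merged into one kernel-verified Lean document; each statement's English description precedes it below -/
import Mathlib

section
/- Let p_H, p_V ∈ (0,1] with p_H ≠ p_V. Then the 2×2 Hermitian matrix M = (1/2)·[[1 − p_H, 1 − √(p_H p_V)], [1 − √(p_H p_V), 1 − p_V]] is not positive semidefinite. (Hence for the polarization dependent loss operation Λ(ρ) = A ρ Aᴴ with A = diag(√p_H, √p_V), the map Φ_Λ − Λ = Id − Λ is not positive, so Φ_Λ − Λ is not a quantum operation and Λ cannot be extended to the channel Φ_Λ = Id.) -/
open Matrix ComplexOrder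

/-- for p_H, p_V ∈ (0,1] with p_H ≠ p_V, the matrix
(1/2)·[[1−p_H, 1−√(p_H p_V)], [1−√(p_H p_V), 1−p_V]] is not positive semidefinite,
so the polarization dependent loss operation cannot be extended to the identity channel. -/
theorem pdl_not_extendable_to_identity (pH pV : ℝ)
    (hH : pH ∈ Set.Ioc (0:ℝ) 1) (hV : pV ∈ Set.Ioc (0:ℝ) 1) (hne : pH ≠ pV) :
    ¬ ((1/2 : ℂ) • !![((1 - pH : ℝ) : ℂ), ((1 - Real.sqrt (pH * pV) : ℝ) : ℂ);
        ((1 - Real.sqrt (pH * pV) : ℝ) : ℂ), ((1 - pV : ℝ) : ℂ)]).PosSemidef := by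
  intro h
  have hd := h.det_nonneg
  have hs := Real.sq_sqrt (mul_nonneg hH.1.le hV.1.le)
  have hs0 := Real.sqrt_nonneg (pH * pV)
  have hpos : 0 < (pH - pV) ^ 2 := by
    have := sub_ne_zero.mpr hne
    positivity
  set s := Real.sqrt (pH * pV) with hsdef
  have hlt : 2 * s < pH + pV := by
    have h1 := hH.1
    have h2 := hV.1
    apply lt_of_pow_lt_pow_left₀ 2 (by linarith)
    nlinarith
  have he : ((1/2 : ℂ) • !![((1 - pH : ℝ) : ℂ), ((1 - s : ℝ) : ℂ);
        ((1 - s : ℝ) : ℂ), ((1 - pV : ℝ) : ℂ)]).det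
      = (((1/4) * ((1 - pH) * (1 - pV) - (1 - s) * (1 - s)) : ℝ) : ℂ) := by
    rw [Matrix.det_smul, Matrix.det_fin_two_of]
    simp only [Fintype.card_fin]
    push_cast
    ring
  rw [he] at hd
  have hd' := Complex.zero_le_real.mp hd
  nlinarith
end

section
/- Let Λ₂ be a quantum operation on d×d complex matrices with Kraus operators A_1,…,A_K (so Σ_k A_kᴴ A_k ≤ I), and let Θ be a quantum operation with Kraus operators T_1,…,T_J (so Σ_j T_jᴴ T_j ≤ I). Let Λ₁ = Θ ∘ Λ₂. Then there exist finitely many (d+1)×(d+1) matrices K_1,…,K_M with Σ_m K_mᴴ K_m = I such that for every d×d matrix X, Γ_{Λ₁}(X) = Σ_m K_m Γ_{Λ₂}(X) K_mᴴ. That is, the generalized erasure channel of Λ₁ = Θ ∘ Λ₂ is a quantum channel composed with the generalized erasure channel of Λ₂. -/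
open Matrix ComplexOrder

/-- The generalized erasure channel of a quantum operation Λ on matrices over `n`:
the (d+1)×(d+1) block matrix with top-left block Λ(X), bottom-right scalar entry
tr(X) − tr(Λ(X)), and zero off-diagonal blocks. -/
noncomputable def gec {n : Type*} [Fintype n] [DecidableEq n]
    (Λ : Matrix n n ℂ → Matrix n n ℂ) (X : Matrix n n ℂ) :
    Matrix (n ⊕ Fin 1) (n ⊕ Fin 1) ℂ :=
  Matrix.fromBlocks (Λ X) 0 0 (Matrix.of fun _ _ => X.trace - (Λ X).trace)

open scoped MatrixOrder Matrix.Norms.L2Operator in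
theorem psd_factor {d : ℕ} {P : Matrix (Fin d) (Fin d) ℂ} (h : P.PosSemidef) :
    ∃ S : Matrix (Fin d) (Fin d) ℂ, P = Sᴴ * S :=
  CStarAlgebra.nonneg_iff_eq_star_mul_self.mp h.nonneg

/-- if Λ₁ = Θ ∘ Λ₂ for quantum operations Θ, Λ₂, then the generalized erasure
channel Γ_{Λ₁} is a quantum channel composed with Γ_{Λ₂}. -/
theorem gec_comp_degradation (d K J : ℕ)
    (A : Fin K → Matrix (Fin d) (Fin d) ℂ)
    (T : Fin J → Matrix (Fin d) (Fin d) ℂ)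
    (hA : (1 - ∑ k, (A k)ᴴ * A k).PosSemidef)
    (hT : (1 - ∑ j, (T j)ᴴ * T j).PosSemidef) :
    ∃ (M : ℕ) (Km : Fin M → Matrix (Fin d ⊕ Fin 1) (Fin d ⊕ Fin 1) ℂ),
      ∑ m, (Km m)ᴴ * Km m = 1 ∧
      ∀ X : Matrix (Fin d) (Fin d) ℂ,
        gec (fun Y => ∑ j, T j * (∑ k, A k * Y * (A k)ᴴ) * (T j)ᴴ) X =
          ∑ m, Km m * gec (fun Y => ∑ k, A k * Y * (A k)ᴴ) X * (Km m)ᴴ := by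
  obtain ⟨S, hS⟩ : ∃ S : Matrix (Fin d) (Fin d) ℂ, 1 - ∑ j, (T j)ᴴ * T j = Sᴴ * S :=
    psd_factor hT
  let R : Fin d → Matrix (Fin 1) (Fin d) ℂ := fun i => Matrix.of fun _ b => S i b
  let L : (Fin J ⊕ Fin d) ⊕ Fin 1 → Matrix (Fin d ⊕ Fin 1) (Fin d ⊕ Fin 1) ℂ :=
    Sum.elim (Sum.elim (fun j => Matrix.fromBlocks (T j) 0 0 0)
      (fun i => Matrix.fromBlocks 0 0 (R i) 0)) (fun _ => Matrix.fromBlocks 0 0 0 1)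
  have hsum : ∀ {ι : Type} (s : Finset ι) (a : ι → Matrix (Fin d) (Fin d) ℂ)
      (b : ι → Matrix (Fin 1) (Fin 1) ℂ),
      ∑ i ∈ s, Matrix.fromBlocks (a i) 0 0 (b i)
        = Matrix.fromBlocks (∑ i ∈ s, a i) 0 0 (∑ i ∈ s, b i) := by
    intro ι s a b
    classical
    induction s using Finset.induction_on with
    | empty => simp
    | insert x s hx ih => simp [Finset.sum_insert hx, ih, Matrix.fromBlocks_add]
  have hR : ∑ i, (R i)ᴴ * R i = Sᴴ * S := by
    ext a b
    simp [R, Matrix.sum_apply, Matrix.mul_apply]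
  have hRt : ∀ Y : Matrix (Fin d) (Fin d) ℂ, ∑ i, R i * Y * (R i)ᴴ =
      Matrix.of fun _ _ => (S * Y * Sᴴ).trace := by
    intro Y
    ext a b
    simp [R, Matrix.sum_apply, Matrix.mul_apply, Matrix.trace]
  have htr : ∀ Y : Matrix (Fin d) (Fin d) ℂ,
      (S * Y * Sᴴ).trace = Y.trace - (∑ j, T j * Y * (T j)ᴴ).trace := by
    intro Y
    rw [Matrix.trace_mul_comm, ← Matrix.mul_assoc, ← hS, Matrix.sub_mul, Matrix.trace_sub,
      Matrix.one_mul, Matrix.sum_mul, Matrix.trace_sum, Matrix.trace_sum]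
    refine congrArg (fun z => Y.trace - z) (Finset.sum_congr rfl fun j _ => ?_)
    rw [Matrix.trace_mul_comm (T j * Y), Matrix.mul_assoc]
  let e := Fintype.equivFin ((Fin J ⊕ Fin d) ⊕ Fin 1)
  refine ⟨_, fun m => L (e.symm m), ?_, fun X => ?_⟩
  · rw [e.symm.sum_comp (fun x => (L x)ᴴ * L x)]
    simp only [Fintype.sum_sum_type, L, Sum.elim_inl, Sum.elim_inr,
      Matrix.fromBlocks_conjTranspose, Matrix.fromBlocks_multiply, Matrix.conjTranspose_zero,
      Matrix.mul_zero, Matrix.zero_mul, add_zero, zero_add, hsum, hR, ← hS,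
      Matrix.fromBlocks_add, Finset.sum_const_zero]
    simp
  · rw [e.symm.sum_comp (fun x => L x * gec (fun Y => ∑ k, A k * Y * (A k)ᴴ) X * (L x)ᴴ)]
    simp only [gec]
    generalize (∑ k, A k * X * (A k)ᴴ) = Y
    simp only [Fintype.sum_sum_type, L, Sum.elim_inl, Sum.elim_inr,
      Matrix.fromBlocks_conjTranspose, Matrix.fromBlocks_multiply, Matrix.conjTranspose_zero,
      Matrix.mul_zero, Matrix.zero_mul, add_zero, zero_add, hsum, hRt, htr,
      Matrix.fromBlocks_add, Finset.sum_const_zero]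
    congr 1
    ext a b
    simp
end

section
/- Let 0 ≤ a < b ≤ 1. Then the supremum over π ∈ [0,1] of h(π·b + (1−π)·a) − π·h(b) − (1−π)·h(a) equals log(1 + exp(−(h(b) − h(a))/(b − a))) − (b·h(a) − a·h(b))/(b − a). -/
/-- The binary entropy h(x) = −x log x − (1−x) log(1−x) (natural logarithm). -/
noncomputable def binEnt (x : ℝ) : ℝ := -x * Real.log x - (1 - x) * Real.log (1 - x)

lemma gibbs_aux (x c : ℝ) (hx : 0 ≤ x) (hc : 0 < c) :
    x * (Real.log c - Real.log x) ≤ c - x := by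
  rcases hx.eq_or_lt with rfl | hx
  · simp [hc.le]
  · rw [← Real.log_div hc.ne' hx.ne']
    have h1 := Real.log_le_sub_one_of_pos (div_pos hc hx)
    have h2 := mul_le_mul_of_nonneg_left h1 hx.le
    have h3 : x * (c / x - 1) = c - x := by field_simp
    linarith

lemma binEnt_eq_aux : binEnt = Real.binEntropy := by
  ext x
  simp only [binEnt, Real.binEntropy, Real.log_inv]
  ring

/-- for 0 ≤ a < b ≤ 1, the supremum over π ∈ [0,1] of
h(πb + (1−π)a) − πh(b) − (1−π)h(a) equals
log(1 + exp(−(h(b)−h(a))/(b−a))) − (b·h(a) − a·h(b))/(b−a). -/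
theorem binary_holevo_sup (a b : ℝ) (ha : 0 ≤ a) (hab : a < b) (hb : b ≤ 1) :
    sSup {y : ℝ | ∃ π ∈ Set.Icc (0:ℝ) 1,
        y = binEnt (π * b + (1 - π) * a) - π * binEnt b - (1 - π) * binEnt a}
      = Real.log (1 + Real.exp (-((binEnt b - binEnt a) / (b - a))))
        - (b * binEnt a - a * binEnt b) / (b - a) := by
  have hba : 0 < b - a := sub_pos.2 hab
  obtain ⟨c, ⟨hac, hcb⟩, hc⟩ := exists_hasDerivAt_eq_slope binEnt
    (fun p => Real.log (1 - p) - Real.log p) hab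
    (by rw [binEnt_eq_aux]; exact Real.binEntropy_continuous.continuousOn)
    (fun p hp => by
      rw [binEnt_eq_aux]
      exact Real.hasDerivAt_binEntropy (by linarith [hp.1]) (by linarith [hp.2]))
  have hc0 : 0 < c := by linarith
  have hc1 : 0 < 1 - c := by linarith
  have hlog : Real.log (1 + Real.exp (-((binEnt b - binEnt a) / (b - a))))
      = - Real.log (1 - c) := by
    rw [← hc, neg_sub, Real.exp_sub, Real.exp_log hc0, Real.exp_log hc1, ← Real.log_inv]
    congr 1
    field_simp
    ring
  have hs : (Real.log (1 - c) - Real.log c) * (b - a) = binEnt b - binEnt a := by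
    rw [hc]; field_simp
  rw [hlog]
  have hk : (b * binEnt a - a * binEnt b) / (b - a)
      = binEnt a - (Real.log (1 - c) - Real.log c) * a := by
    rw [div_eq_iff hba.ne']
    linear_combination a * hs
  rw [hk]
  have key : ∀ π : ℝ, binEnt (π * b + (1 - π) * a) - π * binEnt b - (1 - π) * binEnt a
      = binEnt (π * b + (1 - π) * a)
        - (Real.log (1 - c) - Real.log c) * (π * b + (1 - π) * a)
        - (binEnt a - (Real.log (1 - c) - Real.log c) * a) := by
    intro π
    linear_combination π * hs
  apply IsGreatest.csSup_eq
  constructor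
  · refine ⟨(c - a) / (b - a), ⟨by apply div_nonneg <;> linarith, ?_⟩, ?_⟩
    · rw [div_le_one hba]; linarith
    · rw [key]
      have : (c - a) / (b - a) * b + (1 - (c - a) / (b - a)) * a = c := by
        field_simp
        ring
      rw [this, show binEnt c = -c * Real.log c - (1 - c) * Real.log (1 - c) from rfl]
      ring
  · rintro y ⟨π, ⟨h0, h1⟩, rfl⟩
    rw [key]
    have hx0 : 0 ≤ π * b + (1 - π) * a := by nlinarith
    have hx1 : 0 ≤ 1 - (π * b + (1 - π) * a) := by nlinarith
    generalize π * b + (1 - π) * a = x at *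
    have g1 := gibbs_aux x c hx0 hc0
    have g2 := gibbs_aux (1 - x) (1 - c) hx1 hc1
    rw [show binEnt x = -x * Real.log x - (1 - x) * Real.log (1 - x) from rfl]
    linarith
end

section
/- Let 0 ≤ a ≤ b ≤ 1. Then the supremum over π ∈ [0,1] of h(π·b + (1−π)·a) − π·h(b) − (1−π)·h(a) is at least log 2 − h((1 + (b − a))/2). -/
theorem log_aux (x y s : ℝ) (hx : 0 ≤ x) (hy : 0 ≤ y) (hs : 0 ≤ s)
    (h : 0 < x → 0 < y ∧ 0 < s) :
    x * Real.log s + x - y * s ≤ x * Real.log x - x * Real.log y := by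
  rcases hx.eq_or_lt with h0 | h0
  · subst h0
    nlinarith [mul_nonneg hy hs]
  · obtain ⟨hy', hs'⟩ := h h0
    have h1 := Real.log_le_sub_one_of_pos (show 0 < y * s / x by positivity)
    rw [Real.log_div (by positivity) h0.ne', Real.log_mul hy'.ne' hs'.ne'] at h1
    have h2 := mul_le_mul_of_nonneg_left h1 hx
    have h3 : x * (y * s / x - 1) = y * s - x := by field_simp
    rw [h3] at h2
    linarith

theorem half_log (t : ℝ) : t / 2 * Real.log (t / 2) = (t * Real.log t - t * Real.log 2) / 2 := by
  by_cases h : t = 0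
  · simp [h]
  · rw [Real.log_div h (by norm_num)]; ring

theorem binEnt_eq (x : ℝ) : binEnt x = Real.binEntropy x := by
  unfold binEnt Real.binEntropy
  rw [Real.log_inv, Real.log_inv]; ring

/-- for 0 ≤ a ≤ b ≤ 1, the supremum over π ∈ [0,1] of
h(πb + (1−π)a) − πh(b) − (1−π)h(a) is at least log 2 − h((1 + (b − a))/2). -/
theorem binary_holevo_sup_lower_bound (a b : ℝ) (ha : 0 ≤ a) (hab : a ≤ b) (hb : b ≤ 1) :
    Real.log 2 - binEnt ((1 + (b - a)) / 2) ≤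
      sSup {y : ℝ | ∃ π ∈ Set.Icc (0:ℝ) 1,
        y = binEnt (π * b + (1 - π) * a) - π * binEnt b - (1 - π) * binEnt a} := by
  have key : Real.log 2 - binEnt ((1 + (b - a)) / 2) ≤
      binEnt ((1 / 2) * b + (1 - 1 / 2) * a) - (1 / 2) * binEnt b - (1 - 1 / 2) * binEnt a := by
    obtain ⟨m, hm⟩ : ∃ m, m = (1 / 2) * b + (1 - 1 / 2) * a := ⟨_, rfl⟩
    rw [← hm]
    have e1 := log_aux a m (1 - (b - a)) ha (by linarith) (by linarith)
      (fun h => ⟨by linarith, by linarith⟩)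
    have e2 := log_aux (1 - b) (1 - m) (1 - (b - a)) (by linarith) (by linarith) (by linarith)
      (fun h => ⟨by linarith, by linarith⟩)
    have e3 := log_aux b m (1 + (b - a)) (by linarith) (by linarith) (by linarith)
      (fun h => ⟨by linarith, by linarith⟩)
    have e4 := log_aux (1 - a) (1 - m) (1 + (b - a)) (by linarith) (by linarith) (by linarith)
      (fun h => ⟨by linarith, by linarith⟩)
    have f1 := half_log (1 + (b - a))
    have f2 := half_log (1 - (b - a))
    have g : 1 - (1 + (b - a)) / 2 = (1 - (b - a)) / 2 := by ring
    have hM : m * Real.log m = (a + b) / 2 * Real.log m := by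
      congr 1; linarith
    have hM' : (1 - m) * Real.log (1 - m) = (1 - (a + b) / 2) * Real.log (1 - m) := by
      congr 1; linarith
    unfold binEnt
    rw [g, hM', f2, neg_mul, neg_mul m, hM, f1]
    linarith
  refine key.trans (le_csSup ?_ ⟨1 / 2, ⟨by norm_num, by norm_num⟩, rfl⟩)
  refine ⟨Real.log 2, ?_⟩
  rintro y ⟨p, ⟨hp0, hp1⟩, rfl⟩
  simp only [binEnt_eq]
  have h1 := Real.binEntropy_le_log_two (p := p * b + (1 - p) * a)
  have h2 := mul_nonneg hp0 (Real.binEntropy_nonneg (ha.trans hab) hb)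
  have h3 := mul_nonneg (sub_nonneg.2 hp1) (Real.binEntropy_nonneg ha (hab.trans hb))
  linarith
end

section
/- Let Λ be a quantum operation on d×d complex matrices and Γ_Λ its generalized erasure channel. Let {(π_k, ξ_k)}_{k=1}^N be a finite ensemble of d×d density matrices with all π_k > 0, and suppose p_k := tr(Λ(ξ_k)) > 0 for every k. Set p̄ = Σ_k π_k p_k, q_k = π_k p_k / p̄, and ρ_k = Λ(ξ_k)/p_k. Then S(Γ_Λ(Σ_k π_k ξ_k)) − Σ_k π_k S(Γ_Λ(ξ_k)) = p̄·[ S(Σ_k q_k ρ_k) − Σ_k q_k S(ρ_k) ] + h(p̄) − Σ_k π_k h(p_k). -/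
open Matrix ComplexOrder

/-- The von Neumann entropy S(ρ) = Σ_i −λ_i log λ_i over the eigenvalues of a Hermitian
matrix (and 0 on non-Hermitian matrices). Natural logarithm, 0 log 0 = 0. -/
noncomputable def vnEnt {n : Type*} [Fintype n] [DecidableEq n] (ρ : Matrix n n ℂ) : ℝ :=
  if h : ρ.IsHermitian then ∑ i, -(h.eigenvalues i * Real.log (h.eigenvalues i)) else 0

theorem vnEnt_of_charpoly {n m : Type*} [Fintype n] [DecidableEq n] [Fintype m]
    (M : Matrix n n ℂ) (hM : M.IsHermitian) (v : m → ℝ)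
    (h : M.charpoly = ∏ i, (Polynomial.X - Polynomial.C (v i : ℂ))) :
    vnEnt M = ∑ i, -(v i * Real.log (v i)) := by
  have h1 := hM.roots_charpoly_eq_eigenvalues
  rw [h, Polynomial.roots_prod _ _
    (by simp [Finset.prod_ne_zero_iff, Polynomial.X_sub_C_ne_zero])] at h1
  have h2 := congrArg (fun s : Multiset ℂ =>
    (s.map (fun z : ℂ => -(z.re * Real.log z.re))).sum) h1
  simp only [Polynomial.roots_X_sub_C, Multiset.bind_singleton, Multiset.map_map,
    Function.comp_def] at h2
  rw [vnEnt, dif_pos hM]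
  exact h2.symm

theorem vnEnt_smul {n : Type*} [Fintype n] [DecidableEq n]
    (M : Matrix n n ℂ) (hM : M.IsHermitian) (c : ℝ) (hc : c ≠ 0) :
    vnEnt ((c : ℂ) • M) = c * vnEnt M - c * Real.log c * M.trace.re := by
  have hcM : ((c : ℂ) • M).IsHermitian := by
    unfold Matrix.IsHermitian
    rw [Matrix.conjTranspose_smul, hM.eq]
    simp
  have hch : ((c : ℂ) • M).charpoly =
      ∏ i, (Polynomial.X - Polynomial.C ((c * hM.eigenvalues i : ℝ) : ℂ)) := by
    have e : (c : ℂ) • M = (hM.eigenvectorUnitary : Matrix n n ℂ) *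
        diagonal (fun i => ((c * hM.eigenvalues i : ℝ) : ℂ)) *
        (star hM.eigenvectorUnitary : Matrix n n ℂ) := by
      have e2 : diagonal (fun i => ((c * hM.eigenvalues i : ℝ) : ℂ)) =
          (c : ℂ) • diagonal (RCLike.ofReal ∘ hM.eigenvalues : n → ℂ) := by
        rw [← diagonal_smul]
        congr 1
        ext i
        simp
      conv_lhs => rw [hM.spectral_theorem, Unitary.conjStarAlgAut_apply]
      rw [e2]
      simp
    rw [e, charpoly_mul_comm, ← mul_assoc]
    simp [charpoly_diagonal]
  rw [vnEnt_of_charpoly _ hcM _ hch, hM.trace_eq_sum_eigenvalues, vnEnt, dif_pos hM]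
  simp only [Complex.re_sum, Complex.coe_algebraMap, RCLike.ofReal_re, Complex.ofReal_re]
  rw [Finset.mul_sum, Finset.mul_sum, ← Finset.sum_sub_distrib]
  refine Finset.sum_congr rfl fun i _ => ?_
  change _ = c * -(hM.eigenvalues i * Real.log (hM.eigenvalues i)) -
    c * Real.log c * hM.eigenvalues i
  by_cases h0 : hM.eigenvalues i = 0
  · simp [h0]
  · rw [Real.log_mul hc h0]
    ring

theorem vnEnt_gec {n : Type*} [Fintype n] [DecidableEq n]
    (Λ : Matrix n n ℂ → Matrix n n ℂ) (X : Matrix n n ℂ) (hX : X.trace = 1)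
    (hL : (Λ X).IsHermitian) (t : ℝ) (ht : t ≠ 0) (htr : (Λ X).trace.re = t) :
    vnEnt (gec Λ X) = t * vnEnt ((t : ℂ)⁻¹ • Λ X) + binEnt t := by
  have htr' : (Λ X).trace = (t : ℂ) := by
    rw [← htr, hL.trace_eq_sum_eigenvalues]
    simp
  have hg : gec Λ X = fromBlocks (Λ X) 0 0 (diagonal fun _ => ((1 - t : ℝ) : ℂ)) := by
    unfold gec
    rw [hX, htr']
    congr 1
    ext i j
    simp [Subsingleton.elim i j]
  have hH : (gec Λ X).IsHermitian := by
    rw [hg]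
    refine Matrix.IsHermitian.fromBlocks hL (by simp) ?_
    rw [Matrix.isHermitian_diagonal_iff]
    intro i
    simp [isSelfAdjoint_iff]
  have hch : (gec Λ X).charpoly = ∏ i : n ⊕ Fin 1, (Polynomial.X -
      Polynomial.C ((Sum.elim hL.eigenvalues (fun _ => 1 - t) i : ℝ) : ℂ)) := by
    rw [hg, charpoly_fromBlocks_zero₁₂, hL.charpoly_eq, charpoly_diagonal,
      Fintype.prod_sum_type]
    rfl
  rw [vnEnt_of_charpoly _ hH _ hch, Fintype.sum_sum_type]
  have := vnEnt_smul (Λ X) hL t⁻¹ (inv_ne_zero ht)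
  rw [Complex.ofReal_inv] at this
  rw [this, htr, vnEnt, dif_pos hL, binEnt, Real.log_inv]
  simp
  field_simp
  ring

/-- the Holevo quantity of the ensemble {(π_k, ξ_k)} at the output of the
generalized erasure channel Γ_Λ equals
p̄·[S(Σ q_k ρ_k) − Σ q_k S(ρ_k)] + h(p̄) − Σ π_k h(p_k). -/
theorem gec_holevo_quantity_decomposition (d K N : ℕ)
    (A : Fin K → Matrix (Fin d) (Fin d) ℂ)
    (hA : (1 - ∑ k, (A k)ᴴ * A k).PosSemidef)
    (π : Fin N → ℝ) (ξ : Fin N → Matrix (Fin d) (Fin d) ℂ)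
    (hπ : ∀ i, 0 < π i) (hπ1 : ∑ i, π i = 1)
    (hξ : ∀ i, (ξ i).PosSemidef ∧ (ξ i).trace = 1)
    (p : Fin N → ℝ)
    (hp : ∀ i, p i = ((∑ k, A k * ξ i * (A k)ᴴ).trace).re)
    (hppos : ∀ i, 0 < p i)
    (pbar : ℝ) (hpbar : pbar = ∑ i, π i * p i)
    (q : Fin N → ℝ) (hq : ∀ i, q i = π i * p i / pbar)
    (ρ : Fin N → Matrix (Fin d) (Fin d) ℂ)
    (hρ : ∀ i, ρ i = ((p i : ℂ))⁻¹ • ∑ k, A k * ξ i * (A k)ᴴ) :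
    vnEnt (gec (fun X => ∑ k, A k * X * (A k)ᴴ) (∑ i, (π i : ℂ) • ξ i))
        - ∑ i, π i * vnEnt (gec (fun X => ∑ k, A k * X * (A k)ᴴ) (ξ i))
      = pbar * (vnEnt (∑ i, (q i : ℂ) • ρ i) - ∑ i, q i * vnEnt (ρ i))
        + binEnt pbar - ∑ i, π i * binEnt (p i) := by
  have hN : 0 < pbar := by
    rw [hpbar]
    refine Finset.sum_pos (fun i _ => mul_pos (hπ i) (hppos i)) ?_
    by_contra h
    rw [Finset.not_nonempty_iff_eq_empty] at h
    rw [h] at hπ1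
    simp at hπ1
  have hherm : ∀ i, (∑ k, A k * ξ i * (A k)ᴴ).IsHermitian := fun i =>
    (Matrix.posSemidef_sum _ fun k _ => (hξ i).1.mul_mul_conjTranspose_same (A k)).1
  have hlin : ∑ k, A k * (∑ i, (π i : ℂ) • ξ i) * (A k)ᴴ
      = ∑ i, (π i : ℂ) • ∑ k, A k * ξ i * (A k)ᴴ := by
    simp only [Finset.mul_sum, Finset.sum_mul, Finset.smul_sum, Matrix.mul_smul,
      Matrix.smul_mul]
    exact Finset.sum_comm
  have hi : ∀ i, vnEnt (gec (fun X => ∑ k, A k * X * (A k)ᴴ) (ξ i))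
      = p i * vnEnt (ρ i) + binEnt (p i) := by
    intro i
    rw [hρ i]
    exact vnEnt_gec (fun X => ∑ k, A k * X * (A k)ᴴ) (ξ i) (hξ i).2 (hherm i) (p i)
      (hppos i).ne' (hp i).symm
  have hbar := vnEnt_gec (fun X => ∑ k, A k * X * (A k)ᴴ) (∑ i, (π i : ℂ) • ξ i)
    (by
      simp only [Matrix.trace_sum, Matrix.trace_smul, (hξ _).2, smul_eq_mul, mul_one]
      exact_mod_cast hπ1)
    (by
      simp only [hlin]
      unfold Matrix.IsHermitian
      rw [Matrix.conjTranspose_sum]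
      refine Finset.sum_congr rfl fun i _ => ?_
      rw [Matrix.conjTranspose_smul, (hherm i).eq]
      simp) pbar hN.ne'
    (by
      simp only [hlin]
      rw [Matrix.trace_sum, Complex.re_sum, hpbar]
      refine Finset.sum_congr rfl fun i _ => ?_
      rw [Matrix.trace_smul, smul_eq_mul, Complex.re_ofReal_mul, ← hp i])
  have hq' : (pbar : ℂ)⁻¹ • (∑ k, A k * (∑ i, (π i : ℂ) • ξ i) * (A k)ᴴ)
      = ∑ i, (q i : ℂ) • ρ i := by
    rw [hlin, Finset.smul_sum]
    refine Finset.sum_congr rfl fun i _ => ?_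
    rw [hρ i, hq i, smul_smul, smul_smul]
    congr 1
    have h1 : (p i : ℂ) ≠ 0 := by exact_mod_cast (hppos i).ne'
    push_cast
    field_simp
  simp only [hq'] at hbar
  rw [hbar]
  simp only [hi]
  have h3 : pbar * ∑ i, q i * vnEnt (ρ i) = ∑ i, π i * (p i * vnEnt (ρ i)) := by
    rw [Finset.mul_sum]
    refine Finset.sum_congr rfl fun i _ => ?_
    rw [hq i]
    field_simp
  simp only [mul_add, Finset.sum_add_distrib, mul_sub, h3]
  ring
end

section
/- Let Φ be a quantum channel on d×d complex matrices given by Kraus operators V_1,…,V_J with Σ_j V_jᴴ V_j = I, let p ∈ [0,1], and let Λ = p·Φ be the unbiased quantum operation with Kraus operators √p·V_1,…,√p·V_J. Then the Holevo capacity of the generalized erasure channel Γ_Λ satisfies C_χ(Γ_Λ) = p · C_χ(Φ). -/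
open Matrix ComplexOrder

/-- The Holevo capacity of a map Ψ on matrices: the supremum over finite ensembles of
density matrices of S(Ψ(Σ π_i ρ_i)) − Σ π_i S(Ψ(ρ_i)). -/
noncomputable def holevoCap {n m : Type*} [Fintype n] [DecidableEq n] [Fintype m] [DecidableEq m]
    (Ψ : Matrix n n ℂ → Matrix m m ℂ) : ℝ :=
  sSup {x : ℝ | ∃ (N : ℕ) (π : Fin N → ℝ) (ρ : Fin N → Matrix n n ℂ),
    (∀ i, 0 ≤ π i) ∧ (∑ i, π i = 1) ∧ (∀ i, (ρ i).PosSemidef ∧ (ρ i).trace = 1) ∧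
    x = vnEnt (Ψ (∑ i, (π i : ℂ) • ρ i)) - ∑ i, π i * vnEnt (Ψ (ρ i))}

lemma vnEnt_of_charpoly_s9 {n : Type*} [Fintype n] [DecidableEq n] (A : Matrix n n ℂ)
    (hA : A.IsHermitian) (f : n → ℝ)
    (h : A.charpoly = ∏ i, (Polynomial.X - Polynomial.C ((f i : ℝ) : ℂ))) :
    vnEnt A = ∑ i, Real.negMulLog (f i) := by
  have h1 := hA.roots_charpoly_eq_eigenvalues
  have h2 : A.charpoly.roots = Multiset.map (fun i => ((f i : ℝ) : ℂ)) Finset.univ.val := by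
    rw [h, Polynomial.roots_prod]
    · simp
    · simp [Finset.prod_ne_zero_iff, Polynomial.X_sub_C_ne_zero]
  rw [h1] at h2
  have h3 := congrArg (fun s => (Multiset.map (fun z : ℂ => Real.negMulLog z.re) s).sum) h2
  simp only [Multiset.map_map, Function.comp_def] at h3
  rw [vnEnt, dif_pos hA]
  refine Eq.trans (Finset.sum_congr rfl fun i _ => ?_) h3
  simp [Real.negMulLog_eq_neg]

lemma vnEnt_herm {n : Type*} [Fintype n] [DecidableEq n] (A : Matrix n n ℂ)
    (hA : A.IsHermitian) : vnEnt A = ∑ i, Real.negMulLog (hA.eigenvalues i) :=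
  vnEnt_of_charpoly_s9 A hA _ hA.charpoly_eq

lemma charpoly_smul_herm {n : Type*} [Fintype n] [DecidableEq n] (A : Matrix n n ℂ)
    (hA : A.IsHermitian) (p : ℝ) : ((p : ℂ) • A).charpoly =
      ∏ i, (Polynomial.X - Polynomial.C ((p * hA.eigenvalues i : ℝ) : ℂ)) := by
  conv_lhs => rw [hA.spectral_theorem, ← map_smul, Unitary.conjStarAlgAut_apply,
    charpoly_mul_comm, ← mul_assoc]
  rw [Unitary.coe_star_mul_self, one_mul, ← diagonal_smul, charpoly_diagonal]
  simp

lemma vnEnt_block {n : Type*} [Fintype n] [DecidableEq n] (A : Matrix n n ℂ)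
    (hA : A.IsHermitian) (hT : A.trace = 1) (p : ℝ) :
    vnEnt (Matrix.fromBlocks ((p : ℂ) • A) 0 0
      (Matrix.of fun (_ _ : Fin 1) => (1 : ℂ) - ((p : ℂ) • A).trace)) =
      p * vnEnt A + (Real.negMulLog p + Real.negMulLog (1 - p)) := by
  have hs : ∑ i, hA.eigenvalues i = 1 := by
    have := hA.trace_eq_sum_eigenvalues
    rw [hT] at this
    have h2 := congrArg Complex.re this.symm
    simpa using h2
  have ht : (1 : ℂ) - ((p : ℂ) • A).trace = ((1 - p : ℝ) : ℂ) := by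
    simp [trace_smul, hT]
  rw [ht]
  have hH : (Matrix.fromBlocks ((p : ℂ) • A) 0 0
      (Matrix.of fun (_ _ : Fin 1) => ((1 - p : ℝ) : ℂ))).IsHermitian := by
    apply IsHermitian.fromBlocks
    · rw [IsHermitian, conjTranspose_smul, hA.eq]; simp
    · simp
    · ext i j; simp
  rw [vnEnt_of_charpoly_s9 _ hH (Sum.elim (fun i => p * hA.eigenvalues i) (fun _ => 1 - p)),
    vnEnt_herm A hA]
  · simp only [Fintype.sum_sum_type, Sum.elim_inl, Sum.elim_inr, Real.negMulLog_mul,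
      Finset.sum_add_distrib, ← Finset.sum_mul, ← Finset.mul_sum, hs]
    simp
    ring
  · rw [charpoly_fromBlocks_zero₁₂, charpoly_smul_herm A hA, Fintype.prod_sum_type]
    congr 1
    simp [charpoly, charmatrix]

/-- for the unbiased quantum operation Λ = p·Φ attenuating a channel Φ,
the Holevo capacity of the generalized erasure channel satisfies C_χ(Γ_Λ) = p·C_χ(Φ). -/
theorem holevo_capacity_gec_unbiased (d J : ℕ)
    (V : Fin J → Matrix (Fin d) (Fin d) ℂ)
    (hV : ∑ j, (V j)ᴴ * V j = 1)
    (p : ℝ) (hp : p ∈ Set.Icc (0:ℝ) 1) :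
    holevoCap (gec (fun X => (p : ℂ) • ∑ j, V j * X * (V j)ᴴ))
      = p * holevoCap (fun X => ∑ j, V j * X * (V j)ᴴ) := by
  have htr : ∀ X : Matrix (Fin d) (Fin d) ℂ, (∑ j, V j * X * (V j)ᴴ).trace = X.trace := by
    intro X
    rw [trace_sum]
    simp_rw [fun j => trace_mul_cycle (V j) X (V j)ᴴ]
    rw [← trace_sum, ← Finset.sum_mul, hV, one_mul]
  have key : ∀ X : Matrix (Fin d) (Fin d) ℂ, X.IsHermitian → X.trace = 1 →
      vnEnt (gec (fun X => (p : ℂ) • ∑ j, V j * X * (V j)ᴴ) X) =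
      p * vnEnt (∑ j, V j * X * (V j)ᴴ) + (Real.negMulLog p + Real.negMulLog (1 - p)) := by
    intro X hX h1
    rw [← vnEnt_block _ _ ((htr X).trans h1) p, gec, h1]
    rw [IsHermitian, conjTranspose_sum]
    exact Finset.sum_congr rfl fun j _ => (isHermitian_mul_mul_conjTranspose (V j) hX).eq
  have key2 : ∀ (N : ℕ) (π : Fin N → ℝ) (ρ : Fin N → Matrix (Fin d) (Fin d) ℂ),
      (∑ i, π i = 1) → (∀ i, (ρ i).PosSemidef ∧ (ρ i).trace = 1) →
      vnEnt (gec (fun X => (p : ℂ) • ∑ j, V j * X * (V j)ᴴ) (∑ i, (π i : ℂ) • ρ i))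
        - ∑ i, π i * vnEnt (gec (fun X => (p : ℂ) • ∑ j, V j * X * (V j)ᴴ) (ρ i)) =
      p * (vnEnt (∑ j, V j * (∑ i, (π i : ℂ) • ρ i) * (V j)ᴴ)
        - ∑ i, π i * vnEnt (∑ j, V j * ρ i * (V j)ᴴ)) := by
    intro N π ρ hπ hρ
    rw [key]
    · have : ∀ i, π i * vnEnt (gec (fun X => (p : ℂ) • ∑ j, V j * X * (V j)ᴴ) (ρ i)) =
          p * (π i * vnEnt (∑ j, V j * ρ i * (V j)ᴴ)) +
            π i * (Real.negMulLog p + Real.negMulLog (1 - p)) := by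
        intro i
        rw [key _ (hρ i).1.1 (hρ i).2]
        ring
      rw [Finset.sum_congr rfl fun i _ => this i, Finset.sum_add_distrib, ← Finset.mul_sum,
        ← Finset.sum_mul, hπ]
      ring
    · rw [IsHermitian, conjTranspose_sum]
      refine Finset.sum_congr rfl fun i _ => ?_
      rw [conjTranspose_smul, (hρ i).1.1.eq]
      simp
    · rw [trace_sum]
      simp only [trace_smul, (hρ _).2, smul_eq_mul, mul_one]
      exact_mod_cast hπ
  rw [holevoCap, holevoCap, ← smul_eq_mul, ← Real.sSup_smul_of_nonneg hp.1]
  congr 1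
  ext x
  rw [Set.mem_smul_set]
  constructor
  · rintro ⟨N, π, ρ, h0, h1, h2, rfl⟩
    exact ⟨_, ⟨N, π, ρ, h0, h1, h2, rfl⟩, (key2 N π ρ h1 h2).symm⟩
  · rintro ⟨_, ⟨N, π, ρ, h0, h1, h2, rfl⟩, rfl⟩
    exact ⟨N, π, ρ, h0, h1, h2, (key2 N π ρ h1 h2).symm⟩
end

section
/- Let p_H, p_V ∈ [0,1] and let Γ and Γ̃ be the generalized erasure channel of the polarization dependent loss operation and its complementary channel. Then there exist finitely many 3×3 matrices K_1,…,K_M with Σ_m K_mᴴ K_m = I such that Σ_m K_m Γ(ρ) K_mᴴ = Γ̃(ρ) for every 2×2 matrix ρ (i.e., Γ is degradable) if and only if min(p_H, p_V) ≥ 1/2, or p_H = 1, or p_V = 1. -/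
open Matrix ComplexOrder

/-- The generalized erasure channel of the polarization dependent loss operation
Λ(ρ) = AρAᴴ with A = diag(√p_H, √p_V). -/
noncomputable def GammaPDL (pH pV : ℝ) (ρ : Matrix (Fin 2) (Fin 2) ℂ) :
    Matrix (Fin 3) (Fin 3) ℂ :=
  !![(pH : ℂ) * ρ 0 0, (Real.sqrt (pH * pV) : ℂ) * ρ 0 1, 0;
     (Real.sqrt (pH * pV) : ℂ) * ρ 1 0, (pV : ℂ) * ρ 1 1, 0;
     0, 0, ρ.trace - (pH : ℂ) * ρ 0 0 - (pV : ℂ) * ρ 1 1]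

/-- The complementary channel of the generalized erasure channel of the polarization
dependent loss operation. -/
noncomputable def GammaPDLc (pH pV : ℝ) (ρ : Matrix (Fin 2) (Fin 2) ℂ) :
    Matrix (Fin 3) (Fin 3) ℂ :=
  !![(pH : ℂ) * ρ 0 0 + (pV : ℂ) * ρ 1 1, 0, 0;
     0, ((1 - pH : ℝ) : ℂ) * ρ 0 0, (Real.sqrt ((1 - pH) * (1 - pV)) : ℂ) * ρ 0 1;
     0, (Real.sqrt ((1 - pH) * (1 - pV)) : ℂ) * ρ 1 0, ((1 - pV : ℝ) : ℂ) * ρ 1 1]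

lemma pdl_diag (M : ℕ) (Km : Fin M → Matrix (Fin 3) (Fin 3) ℂ) (x y z : ℝ) (i : Fin 3) :
    ((∑ m, Km m * !![(x:ℂ), 0, 0; 0, (y:ℂ), 0; 0, 0, (z:ℂ)] * (Km m)ᴴ) i i).re
      = x * ∑ m, Complex.normSq (Km m i 0) + y * ∑ m, Complex.normSq (Km m i 1)
        + z * ∑ m, Complex.normSq (Km m i 2) := by
  rw [Matrix.sum_apply, Complex.re_sum, Finset.mul_sum, Finset.mul_sum, Finset.mul_sum,
    ← Finset.sum_add_distrib, ← Finset.sum_add_distrib]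
  refine Finset.sum_congr rfl fun m _ => ?_
  simp [Matrix.mul_apply, Fin.sum_univ_three, Complex.normSq_apply]
  ring

lemma pdl_forward (pH pV : ℝ) (hH : pH < 1) (hV : pV < 1)
    (M : ℕ) (Km : Fin M → Matrix (Fin 3) (Fin 3) ℂ)
    (h1 : ∑ m, (Km m)ᴴ * Km m = 1)
    (h2 : ∀ ρ : Matrix (Fin 2) (Fin 2) ℂ,
        ∑ m, Km m * GammaPDL pH pV ρ * (Km m)ᴴ = GammaPDLc pH pV ρ)
    (h0H : 0 ≤ pH) (h0V : 0 ≤ pV) : 1/2 ≤ pH ∧ 1/2 ≤ pV := by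
  have e1 : GammaPDL pH pV !![1,0;0,0]
      = !![(pH:ℂ), 0, 0; 0, ((0:ℝ):ℂ), 0; 0, 0, ((1-pH:ℝ):ℂ)] := by
    simp [GammaPDL, Matrix.trace, Fin.sum_univ_two, Matrix.vecMul,
        dotProduct]
  have e2 : GammaPDL pH pV !![0,0;0,1]
      = !![((0:ℝ):ℂ), 0, 0; 0, (pV:ℂ), 0; 0, 0, ((1-pV:ℝ):ℂ)] := by
    simp [GammaPDL, Matrix.trace, Fin.sum_univ_two, Matrix.vecMul,
        dotProduct]
  have hA := h2 !![1,0;0,0]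
  have hB := h2 !![0,0;0,1]
  rw [e1] at hA
  rw [e2] at hB
  have a0 := pdl_diag M Km pH 0 (1-pH) 0
  have a2 := pdl_diag M Km pH 0 (1-pH) 2
  have b0 := pdl_diag M Km 0 pV (1-pV) 0
  have b1 := pdl_diag M Km 0 pV (1-pV) 1
  rw [hA] at a0 a2
  rw [hB] at b0 b1
  have nn : ∀ i j, 0 ≤ ∑ m, Complex.normSq (Km m i j) := fun i j =>
    Finset.sum_nonneg fun m _ => Complex.normSq_nonneg _
  have tr : ∑ m, Complex.normSq (Km m 0 2) + ∑ m, Complex.normSq (Km m 1 2)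
      + ∑ m, Complex.normSq (Km m 2 2) = 1 := by
    have := congrArg Complex.re (congrFun (congrFun h1 2) 2)
    rw [Matrix.sum_apply, Complex.re_sum] at this
    rw [← Finset.sum_add_distrib, ← Finset.sum_add_distrib]
    simpa [Matrix.mul_apply, Fin.sum_univ_three, Complex.normSq_apply] using this
  simp only [GammaPDLc] at a0 a2 b0 b1
  simp at a0 a2 b0 b1
  have n00 := nn 0 0
  have n01 := nn 0 1
  have n20 := nn 2 0
  have n11 := nn 1 1
  have n12 := nn 1 2
  have n22 := nn 2 2
  generalize ∑ m, Complex.normSq (Km m 0 0) = s00 at *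
  generalize ∑ m, Complex.normSq (Km m 0 1) = s01 at *
  generalize ∑ m, Complex.normSq (Km m 0 2) = s02 at *
  generalize ∑ m, Complex.normSq (Km m 2 0) = s20 at *
  generalize ∑ m, Complex.normSq (Km m 1 1) = s11 at *
  generalize ∑ m, Complex.normSq (Km m 1 2) = s12 at *
  generalize ∑ m, Complex.normSq (Km m 2 2) = s22 at *
  have z22 : s22 = 0 := by
    by_contra hne
    have : 0 < s22 := lt_of_le_of_ne n22 (Ne.symm hne)
    nlinarith [mul_pos (sub_pos.2 hH) this, mul_nonneg h0H n20]
  have z12 : s12 = 0 := by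
    by_contra hne
    have : 0 < s12 := lt_of_le_of_ne n12 (Ne.symm hne)
    nlinarith [mul_pos (sub_pos.2 hV) this, mul_nonneg h0V n11]
  have o : s02 = 1 := by linarith
  subst o
  constructor
  · nlinarith [mul_nonneg h0H n00]
  · nlinarith [mul_nonneg h0V n01]

lemma pdl_half (a b : ℝ) (ha : 1/2 ≤ a) (hb : 1/2 ≤ b) (ha1 : a ≤ 1) (hb1 : b ≤ 1) :
    ∃ (M : ℕ) (Km : Fin M → Matrix (Fin 3) (Fin 3) ℂ),
      ∑ m, (Km m)ᴴ * Km m = 1 ∧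
      ∀ ρ : Matrix (Fin 2) (Fin 2) ℂ,
        ∑ m, Km m * GammaPDL a b ρ * (Km m)ᴴ = GammaPDLc a b ρ := by
  have a0 : 0 < a := by linarith
  have b0 : 0 < b := by linarith
  obtain ⟨u, hu⟩ : ∃ u, u = √((1-a)/a) := ⟨_, rfl⟩
  obtain ⟨v, hv⟩ : ∃ v, v = √((1-b)/b) := ⟨_, rfl⟩
  obtain ⟨s, hs⟩ : ∃ s, s = √((2*a-1)/a) := ⟨_, rfl⟩
  obtain ⟨t, ht⟩ : ∃ t, t = √((2*b-1)/b) := ⟨_, rfl⟩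
  have hu2 : u * u = (1-a)/a := by
    rw [hu]; exact Real.mul_self_sqrt (div_nonneg (by linarith) a0.le)
  have hv2 : v * v = (1-b)/b := by
    rw [hv]; exact Real.mul_self_sqrt (div_nonneg (by linarith) b0.le)
  have hs2 : s * s = (2*a-1)/a := by
    rw [hs]; exact Real.mul_self_sqrt (div_nonneg (by linarith) a0.le)
  have ht2 : t * t = (2*b-1)/b := by
    rw [ht]; exact Real.mul_self_sqrt (div_nonneg (by linarith) b0.le)
  have hw : √((1-a)*(1-b)) = u * v * √(a*b) := by
    rw [hu, hv, ← Real.sqrt_mul (div_nonneg (by linarith) a0.le),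
      ← Real.sqrt_mul (mul_nonneg (div_nonneg (by linarith) a0.le)
        (div_nonneg (by linarith) b0.le))]
    congr 1
    field_simp
  have p1 : ((u * u + s * s : ℝ) : ℂ) = 1 := by
    rw [hu2, hs2]; norm_cast; field_simp; ring
  have p2 : ((v * v + t * t : ℝ) : ℂ) = 1 := by
    rw [hv2, ht2]; norm_cast; field_simp; ring
  have q1 : ((u * u * a : ℝ) : ℂ) = ((1 - a : ℝ) : ℂ) := by
    rw [hu2]; norm_cast; field_simp
  have q2 : ((v * v * b : ℝ) : ℂ) = ((1 - b : ℝ) : ℂ) := by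
    rw [hv2]; norm_cast; field_simp
  push_cast at p1 p2 q1 q2
  refine ⟨4, ![!![0,0,0;(u:ℂ),0,0;0,(v:ℂ),0], !![(s:ℂ),0,0;0,0,0;0,0,0],
    !![0,(t:ℂ),0;0,0,0;0,0,0], !![0,0,1;0,0,0;0,0,0]], ?_, ?_⟩
  · ext i j
    fin_cases i <;> fin_cases j <;>
      simp [Fin.sum_univ_four, Matrix.mul_apply, Fin.sum_univ_three]
    · linear_combination p1
    · linear_combination p2
  · intro ρ
    simp only [GammaPDL, GammaPDLc, hw]
    ext i j
    fin_cases i <;> fin_cases j <;>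
      simp [Fin.sum_univ_four, Matrix.mul_apply, Fin.sum_univ_three, Matrix.trace, Matrix.vecMul, dotProduct,
        Fin.sum_univ_two]
    · linear_combination (a * ρ 0 0) * p1 + (b * ρ 1 1) * p2 - ρ 0 0 * q1 - ρ 1 1 * q2
    · linear_combination ρ 0 0 * q1
    · ring
    · ring
    · linear_combination ρ 1 1 * q2

lemma pdl_H (b : ℝ) :
    ∃ (M : ℕ) (Km : Fin M → Matrix (Fin 3) (Fin 3) ℂ),
      ∑ m, (Km m)ᴴ * Km m = 1 ∧
      ∀ ρ : Matrix (Fin 2) (Fin 2) ℂ,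
        ∑ m, Km m * GammaPDL 1 b ρ * (Km m)ᴴ = GammaPDLc 1 b ρ := by
  refine ⟨3, ![!![1,0,0;0,0,0;0,0,0], !![0,1,0;0,0,0;0,0,0],
    !![0,0,0;0,0,0;0,0,1]], ?_, ?_⟩
  · ext i j
    fin_cases i <;> fin_cases j <;> simp [Fin.sum_univ_three, Matrix.mul_apply]
  · intro ρ
    simp only [GammaPDL, GammaPDLc]
    ext i j
    fin_cases i <;> fin_cases j <;>
      simp [Matrix.mul_apply, Fin.sum_univ_three, Matrix.trace, Fin.sum_univ_two, Matrix.vecMul,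
        dotProduct]
    ring

lemma pdl_V (a : ℝ) :
    ∃ (M : ℕ) (Km : Fin M → Matrix (Fin 3) (Fin 3) ℂ),
      ∑ m, (Km m)ᴴ * Km m = 1 ∧
      ∀ ρ : Matrix (Fin 2) (Fin 2) ℂ,
        ∑ m, Km m * GammaPDL a 1 ρ * (Km m)ᴴ = GammaPDLc a 1 ρ := by
  refine ⟨3, ![!![1,0,0;0,0,0;0,0,0], !![0,1,0;0,0,0;0,0,0],
    !![0,0,0;0,0,1;0,0,0]], ?_, ?_⟩
  · ext i j
    fin_cases i <;> fin_cases j <;> simp [Fin.sum_univ_three, Matrix.mul_apply]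
  · intro ρ
    simp only [GammaPDL, GammaPDLc]
    ext i j
    fin_cases i <;> fin_cases j <;>
      simp [Matrix.mul_apply, Fin.sum_univ_three, Matrix.trace, Fin.sum_univ_two, Matrix.vecMul,
        dotProduct]
    ring

/-- the generalized erasure channel of the polarization dependent loss
operation is degradable iff min(p_H, p_V) ≥ 1/2, or p_H = 1, or p_V = 1. -/
theorem pdl_gec_degradable_iff (pH pV : ℝ)
    (hH : pH ∈ Set.Icc (0:ℝ) 1) (hV : pV ∈ Set.Icc (0:ℝ) 1) :
    (∃ (M : ℕ) (Km : Fin M → Matrix (Fin 3) (Fin 3) ℂ),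
      ∑ m, (Km m)ᴴ * Km m = 1 ∧
      ∀ ρ : Matrix (Fin 2) (Fin 2) ℂ,
        ∑ m, Km m * GammaPDL pH pV ρ * (Km m)ᴴ = GammaPDLc pH pV ρ)
    ↔ (1/2 ≤ min pH pV ∨ pH = 1 ∨ pV = 1) := by
  constructor
  · rintro ⟨M, Km, h1, h2⟩
    by_cases e1 : pH = 1
    · exact Or.inr (Or.inl e1)
    by_cases e2 : pV = 1
    · exact Or.inr (Or.inr e2)
    obtain ⟨x, y⟩ := pdl_forward pH pV (lt_of_le_of_ne hH.2 e1) (lt_of_le_of_ne hV.2 e2)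
      M Km h1 h2 hH.1 hV.1
    exact Or.inl (le_min x y)
  · rintro (h | rfl | rfl)
    · exact pdl_half pH pV (h.trans (min_le_left _ _)) (h.trans (min_le_right _ _)) hH.2 hV.2
    · exact pdl_H pV
    · exact pdl_V pH
end

section
/- Let p_H, p_V ∈ [0,1] and let Γ and Γ̃ be the generalized erasure channel of the polarization dependent loss operation and its complementary channel. Then there exist finitely many 3×3 matrices K_1,…,K_M with Σ_m K_mᴴ K_m = I such that Σ_m K_m Γ̃(ρ) K_mᴴ = Γ(ρ) for every 2×2 matrix ρ (i.e., Γ is antidegradable) if and only if max(p_H, p_V) ≤ 1/2, or p_H = 0, or p_V = 0. -/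
open Matrix ComplexOrder

lemma pdl_aux_entry {M : ℕ} (K : Fin M → Matrix (Fin 3) (Fin 3) ℂ) (pH pV : ℝ) (i : Fin 3)
    (ρ : Matrix (Fin 2) (Fin 2) ℂ) (h01 : ρ 0 1 = 0) (h10 : ρ 1 0 = 0) :
    (∑ m, K m * GammaPDLc pH pV ρ * (K m)ᴴ) i i =
      (pH * ρ 0 0 + pV * ρ 1 1) * ((∑ m, Complex.normSq (K m i 0) : ℝ) : ℂ)
      + (1 - pH) * ρ 0 0 * ((∑ m, Complex.normSq (K m i 1) : ℝ) : ℂ)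
      + (1 - pV) * ρ 1 1 * ((∑ m, Complex.normSq (K m i 2) : ℝ) : ℂ) := by
  rw [Matrix.sum_apply]
  push_cast
  rw [Finset.mul_sum, Finset.mul_sum, Finset.mul_sum, ← Finset.sum_add_distrib,
    ← Finset.sum_add_distrib]
  refine Finset.sum_congr rfl fun m _ => ?_
  simp only [Matrix.mul_apply, Fin.sum_univ_three, GammaPDLc, Matrix.conjTranspose_apply]
  simp [h01, h10, Complex.normSq_eq_conj_mul_self]
  ring

lemma pdl_aux_col {M : ℕ} (K : Fin M → Matrix (Fin 3) (Fin 3) ℂ)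
    (h : ∑ m, (K m)ᴴ * K m = 1) (i j : Fin 3) :
    ∑ m, Complex.normSq (K m i j) ≤ 1 := by
  have h1 := congrFun (congrFun h j) j
  rw [Matrix.sum_apply] at h1
  have h2 : ((∑ m, ∑ l, Complex.normSq (K m l j) : ℝ) : ℂ) = 1 := by
    rw [Matrix.one_apply_eq] at h1
    rw [← h1]
    push_cast
    refine Finset.sum_congr rfl fun m _ => ?_
    simp [Matrix.mul_apply, Complex.normSq_eq_conj_mul_self]
  have h3 : (∑ m, ∑ l, Complex.normSq (K m l j) : ℝ) = 1 := by exact_mod_cast h2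
  rw [← h3]
  refine Finset.sum_le_sum fun m _ => ?_
  exact Finset.single_le_sum (f := fun l => Complex.normSq (K m l j))
    (fun l _ => Complex.normSq_nonneg _) (Finset.mem_univ i)

lemma pdl_aux_nonneg {M : ℕ} (K : Fin M → Matrix (Fin 3) (Fin 3) ℂ) (i j : Fin 3) :
    0 ≤ ∑ m, Complex.normSq (K m i j) :=
  Finset.sum_nonneg fun _ _ => Complex.normSq_nonneg _

/-- the generalized erasure channel of the polarization dependent loss
operation is antidegradable iff max(p_H, p_V) ≤ 1/2, or p_H = 0, or p_V = 0. -/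
theorem pdl_gec_antidegradable_iff (pH pV : ℝ)
    (hH : pH ∈ Set.Icc (0:ℝ) 1) (hV : pV ∈ Set.Icc (0:ℝ) 1) :
    (∃ (M : ℕ) (Km : Fin M → Matrix (Fin 3) (Fin 3) ℂ),
      ∑ m, (Km m)ᴴ * Km m = 1 ∧
      ∀ ρ : Matrix (Fin 2) (Fin 2) ℂ,
        ∑ m, Km m * GammaPDLc pH pV ρ * (Km m)ᴴ = GammaPDL pH pV ρ)
    ↔ (max pH pV ≤ 1/2 ∨ pH = 0 ∨ pV = 0) := by
  obtain ⟨hH0, hH1⟩ := hH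
  obtain ⟨hV0, hV1⟩ := hV
  constructor
  · rintro ⟨M, K, hK, hG⟩
    by_contra hcon
    push Not at hcon
    obtain ⟨hm, hHne, hVne⟩ := hcon
    have hHp : 0 < pH := lt_of_le_of_ne hH0 (Ne.symm hHne)
    have hVp : 0 < pV := lt_of_le_of_ne hV0 (Ne.symm hVne)
    have key : ∀ i : Fin 3, ∀ a b : ℝ,
        (pH * a + pV * b) * (∑ m, Complex.normSq (K m i 0))
        + (1 - pH) * a * (∑ m, Complex.normSq (K m i 1))
        + (1 - pV) * b * (∑ m, Complex.normSq (K m i 2))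
        = ![pH * a, pV * b, a + b - pH * a - pV * b] i := by
      intro i a b
      have h1 := pdl_aux_entry K pH pV i !![(a : ℂ), 0; 0, (b : ℂ)] (by simp) (by simp)
      rw [hG] at h1
      apply Complex.ofReal_injective
      fin_cases i <;> simp [GammaPDL, Matrix.trace_fin_two] at h1 ⊢ <;> exact h1.symm
    have e1 := key 0 1 0
    have e2 := key 0 0 1
    have e3 := key 1 1 0
    have e4 := key 1 0 1
    simp at e1 e2 e3 e4
    have n00 := pdl_aux_nonneg K 0 0
    have n02 := pdl_aux_nonneg K 0 2
    have n10 := pdl_aux_nonneg K 1 0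
    have n11 := pdl_aux_nonneg K 1 1
    have c01 := pdl_aux_col K hK 0 1
    have c12 := pdl_aux_col K hK 1 2
    generalize ∑ m, Complex.normSq (K m 0 0) = x00 at *
    generalize ∑ m, Complex.normSq (K m 0 1) = x01 at *
    generalize ∑ m, Complex.normSq (K m 0 2) = x02 at *
    generalize ∑ m, Complex.normSq (K m 1 0) = x10 at *
    generalize ∑ m, Complex.normSq (K m 1 1) = x11 at *
    generalize ∑ m, Complex.normSq (K m 1 2) = x12 at *
    have z00 : x00 = 0 := by
      have := mul_nonneg (sub_nonneg.2 hV1) n02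
      by_contra hne
      have := mul_pos hVp (lt_of_le_of_ne n00 (Ne.symm hne))
      linarith
    have z10 : x10 = 0 := by
      have := mul_nonneg (sub_nonneg.2 hH1) n11
      by_contra hne
      have := mul_pos hHp (lt_of_le_of_ne n10 (Ne.symm hne))
      linarith
    subst z00 z10
    have g1 := mul_le_mul_of_nonneg_left c01 (sub_nonneg.2 hH1)
    have g2 := mul_le_mul_of_nonneg_left c12 (sub_nonneg.2 hV1)
    have : max pH pV ≤ 1/2 := max_le (by linarith) (by linarith)
    linarith
  · rintro (h | h | h)
    · have hH2 : pH ≤ 1/2 := le_trans (le_max_left _ _) h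
      have hV2 : pV ≤ 1/2 := le_trans (le_max_right _ _) h
      have ha0 : 0 ≤ pH / (1 - pH) := div_nonneg hH0 (by linarith)
      have hb0 : 0 ≤ pV / (1 - pV) := div_nonneg hV0 (by linarith)
      have ha1 : pH / (1 - pH) ≤ 1 := by rw [div_le_one (by linarith)]; linarith
      have hb1 : pV / (1 - pV) ≤ 1 := by rw [div_le_one (by linarith)]; linarith
      have ha : (1 - pH) * (pH / (1 - pH)) = pH := mul_div_cancel₀ _ (by linarith)
      have hb : (1 - pV) * (pV / (1 - pV)) = pV := mul_div_cancel₀ _ (by linarith)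
      generalize pH / (1 - pH) = a at *
      generalize pV / (1 - pV) = b at *
      have hs : Real.sqrt (pH * pV) = Real.sqrt a * Real.sqrt b *
          Real.sqrt ((1 - pH) * (1 - pV)) := by
        rw [← Real.sqrt_mul ha0, ← Real.sqrt_mul (mul_nonneg ha0 hb0)]
        congr 1
        nth_rewrite 1 [← ha, ← hb]
        ring
      have sa : (Real.sqrt a : ℂ) * (Real.sqrt a : ℂ) = a := by
        exact_mod_cast Real.mul_self_sqrt ha0
      have sb : (Real.sqrt b : ℂ) * (Real.sqrt b : ℂ) = b := by
        exact_mod_cast Real.mul_self_sqrt hb0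
      have sa' : (Real.sqrt (1 - a) : ℂ) * (Real.sqrt (1 - a) : ℂ) = 1 - a := by
        exact_mod_cast Real.mul_self_sqrt (sub_nonneg.2 ha1)
      have sb' : (Real.sqrt (1 - b) : ℂ) * (Real.sqrt (1 - b) : ℂ) = 1 - b := by
        exact_mod_cast Real.mul_self_sqrt (sub_nonneg.2 hb1)
      have ha' : (1 - pH : ℂ) * a = pH := by exact_mod_cast ha
      have hb' : (1 - pV : ℂ) * b = pV := by exact_mod_cast hb
      have hs' : (Real.sqrt (pH * pV) : ℂ) = Real.sqrt a * Real.sqrt b *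
          Real.sqrt ((1 - pH) * (1 - pV)) := by exact_mod_cast hs
      refine ⟨4, ![!![0, (Real.sqrt a : ℂ), 0; 0, 0, (Real.sqrt b : ℂ); 0, 0, 0],
        !![0, 0, 0; 0, 0, 0; 1, 0, 0],
        !![0, 0, 0; 0, 0, 0; 0, (Real.sqrt (1 - a) : ℂ), 0],
        !![0, 0, 0; 0, 0, 0; 0, 0, (Real.sqrt (1 - b) : ℂ)]], ?_, ?_⟩
      · ext i j
        fin_cases i <;> fin_cases j <;>
          simp [Fin.sum_univ_four, Matrix.mul_apply, Fin.sum_univ_three, sa, sb, sa', sb']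
      · intro ρ
        unfold GammaPDL GammaPDLc
        rw [hs']
        generalize (Real.sqrt ((1 - pH) * (1 - pV)) : ℝ) = t at *
        generalize (Real.sqrt a : ℝ) = ra at *
        generalize (Real.sqrt b : ℝ) = rb at *
        generalize (Real.sqrt (1 - a) : ℝ) = rc at *
        generalize (Real.sqrt (1 - b) : ℝ) = rd at *
        ext i j
        fin_cases i <;> fin_cases j <;>
          simp [Fin.sum_univ_four, Matrix.mul_apply, Fin.sum_univ_three, Matrix.trace_fin_two,
            Matrix.vecMul, dotProduct]
        · linear_combination (1 - pH : ℂ) * ρ 0 0 * sa + ρ 0 0 * ha'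
        · ring
        · ring
        · linear_combination (1 - pV : ℂ) * ρ 1 1 * sb + ρ 1 1 * hb'
        · linear_combination (1 - pH : ℂ) * ρ 0 0 * sa' - ρ 0 0 * ha' +
            (1 - pV : ℂ) * ρ 1 1 * sb' - ρ 1 1 * hb'
    · subst h
      refine ⟨3, ![!![0, 0, 0; 1, 0, 0; 0, 0, 0], !![0, 0, 0; 0, 0, 0; 0, 1, 0],
        !![0, 0, 0; 0, 0, 0; 0, 0, 1]], ?_, ?_⟩
      · ext i j
        fin_cases i <;> fin_cases j <;>
          simp [Matrix.mul_apply, Fin.sum_univ_three]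
      · intro ρ
        ext i j
        fin_cases i <;> fin_cases j <;>
          simp [GammaPDL, GammaPDLc, Matrix.mul_apply, Fin.sum_univ_three, Matrix.trace_fin_two,
            Matrix.vecMul, dotProduct]
        ring
    · subst h
      refine ⟨3, ![!![1, 0, 0; 0, 0, 0; 0, 0, 0], !![0, 0, 0; 0, 0, 0; 0, 1, 0],
        !![0, 0, 0; 0, 0, 0; 0, 0, 1]], ?_, ?_⟩
      · ext i j
        fin_cases i <;> fin_cases j <;>
          simp [Matrix.mul_apply, Fin.sum_univ_three]
      · intro ρ
        ext i j
        fin_cases i <;> fin_cases j <;>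
          simp [GammaPDL, GammaPDLc, Matrix.mul_apply, Fin.sum_univ_three, Matrix.trace_fin_two,
            Matrix.vecMul, dotProduct]
        ring
end

section
/- Let p_H, p_V ∈ [0,1] and let q(ρ) = S(Γ(ρ)) − S(Γ̃(ρ)) be the coherent information of the generalized erasure channel of the polarization dependent loss operation. Then: (a) if max(p_H, p_V) ≤ 1/2, then q(ρ) ≤ 0 for every 2×2 density matrix ρ; (b) if max(p_H, p_V) > 1/2 and p_H > 0 and p_V > 0, then there exists a 2×2 density matrix ρ with q(ρ) > 0. -/
open Matrix ComplexOrder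

open Polynomial in
lemma vnEnt_of_charpoly_s16 (A : Matrix (Fin 3) (Fin 3) ℂ) (h : A.IsHermitian) (x y z : ℝ)
    (hc : A.charpoly = (X - C (x:ℂ)) * (X - C (y:ℂ)) * (X - C (z:ℂ))) :
    vnEnt A = Real.negMulLog x + Real.negMulLog y + Real.negMulLog z := by
  have h1 := h.roots_charpoly_eq_eigenvalues
  have h2 : A.charpoly.roots = {(x:ℂ), (y:ℂ), (z:ℂ)} := by
    rw [hc]
    have := Polynomial.roots_multiset_prod_X_sub_C ({(x:ℂ), (y:ℂ), (z:ℂ)} : Multiset ℂ)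
    rw [← this]
    congr 1
    simp [mul_assoc]
  rw [h2] at h1
  have h3 := congrArg (fun s : Multiset ℂ => (s.map (fun w => Real.negMulLog w.re)).sum) h1
  simp only [Multiset.map_map] at h3
  rw [vnEnt, dif_pos h]
  simp [Fin.sum_univ_three] at h3
  simp only [Fin.sum_univ_three]
  simp only [Real.negMulLog] at *
  linarith

open Polynomial in
lemma vnEnt_blockA (u v w w' z : ℂ) (x y z' : ℝ)
    (h : (!![u, w, 0; w', v, 0; 0, 0, z] : Matrix (Fin 3) (Fin 3) ℂ).IsHermitian)
    (h1 : (x:ℂ) + y = u + v) (h2 : (x:ℂ) * y = u * v - w * w') (hz : z = z') :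
    vnEnt (!![u, w, 0; w', v, 0; 0, 0, z] : Matrix (Fin 3) (Fin 3) ℂ) =
      Real.negMulLog x + Real.negMulLog y + Real.negMulLog z' := by
  apply vnEnt_of_charpoly_s16 _ h
  have e1 := congrArg (C : ℂ → ℂ[X]) h1
  have e2 := congrArg (C : ℂ → ℂ[X]) h2
  simp only [map_add, map_mul, map_sub] at e1 e2
  simp [Matrix.charpoly, Matrix.det_fin_three, Matrix.charmatrix_apply, hz]
  linear_combination (X * (X - C (z':ℂ))) * e1 - (X - C (z':ℂ)) * e2

open Polynomial in
lemma vnEnt_blockB (u v w w' z : ℂ) (x y z' : ℝ)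
    (h : (!![z, 0, 0; 0, u, w; 0, w', v] : Matrix (Fin 3) (Fin 3) ℂ).IsHermitian)
    (h1 : (x:ℂ) + y = u + v) (h2 : (x:ℂ) * y = u * v - w * w') (hz : z = z') :
    vnEnt (!![z, 0, 0; 0, u, w; 0, w', v] : Matrix (Fin 3) (Fin 3) ℂ) =
      Real.negMulLog x + Real.negMulLog y + Real.negMulLog z' := by
  apply vnEnt_of_charpoly_s16 _ h
  have e1 := congrArg (C : ℂ → ℂ[X]) h1
  have e2 := congrArg (C : ℂ → ℂ[X]) h2
  simp only [map_add, map_mul, map_sub] at e1 e2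
  simp [Matrix.charpoly, Matrix.det_fin_three, Matrix.charmatrix_apply, hz]
  linear_combination (X * (X - C (z':ℂ))) * e1 - (X - C (z':ℂ)) * e2

noncomputable def Hcl (x y : ℝ) : ℝ :=
  Real.negMulLog x + Real.negMulLog y - Real.negMulLog (x + y)

lemma Hcl_comm (x y : ℝ) : Hcl x y = Hcl y x := by
  unfold Hcl; rw [add_comm x y]; ring

lemma Hcl_mono_left (y : ℝ) (hy : 0 ≤ y) : MonotoneOn (fun x => Hcl x y) (Set.Ici 0) := by
  unfold Hcl
  have key : ∀ x : ℝ, 0 < x → HasDerivAt (fun x => Real.negMulLog x + Real.negMulLog y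
      - Real.negMulLog (x + y)) ((-Real.log x - 1) - (-Real.log (x + y) - 1)) x := by
    intro x hx
    have h1 := Real.hasDerivAt_negMulLog hx.ne'
    have h2 := (Real.hasDerivAt_negMulLog (x := x + y) (by positivity)).comp_add_const x y
    exact (h1.add_const _).sub h2
  apply monotoneOn_of_deriv_nonneg (convex_Ici 0)
  · have := Real.continuous_negMulLog
    fun_prop
  · intro x hx
    rw [interior_Ici] at hx
    exact (key x hx).differentiableAt.differentiableWithinAt
  · intro x hx
    rw [interior_Ici] at hx
    have hx' : 0 < x := hx
    rw [(key x hx').deriv]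
    have := Real.log_le_log hx' (by linarith : x ≤ x + y)
    linarith

lemma Hcl_mono {x y x' y' : ℝ} (hx : 0 ≤ x) (hy : 0 ≤ y) (hx' : x ≤ x') (hy' : y ≤ y') :
    Hcl x y ≤ Hcl x' y' := by
  have h1 : Hcl x y ≤ Hcl x' y :=
    Hcl_mono_left y hy (Set.mem_Ici.2 hx) (Set.mem_Ici.2 (hx.trans hx')) hx'
  have h2 : Hcl y x' ≤ Hcl y' x' :=
    Hcl_mono_left x' (hx.trans hx') (Set.mem_Ici.2 hy) (Set.mem_Ici.2 (hy.trans hy')) hy'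
  rw [Hcl_comm y, Hcl_comm y'] at h2
  exact h1.trans h2

lemma exists_eig (u v m : ℝ) (hu : 0 ≤ u) (hv : 0 ≤ v) (hm : 0 ≤ m) (hd : m ≤ u * v) :
    ∃ x y : ℝ, 0 ≤ y ∧ y ≤ x ∧ x + y = u + v ∧ x * y = u * v - m := by
  set s := √((u - v)^2 + 4 * m) with hs
  have hs0 : 0 ≤ s := Real.sqrt_nonneg _
  have hs2 : s ^ 2 = (u - v)^2 + 4 * m := Real.sq_sqrt (by positivity)
  have : s ≤ u + v := by
    apply Real.sqrt_le_iff.2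
    constructor <;> nlinarith
  refine ⟨(u + v + s)/2, (u + v - s)/2, by linarith, by linarith, by ring, ?_⟩
  nlinarith

lemma le_of_quad {x y u v m : ℝ} (hyx : y ≤ x) (h1 : x + y = u + v)
    (h2 : x * y = u * v - m) (hm : 0 ≤ m) : y ≤ u ∧ u ≤ x := by
  have hk : (u - x) * (u - y) ≤ 0 := by
    have : (u - x) * (u - y) = -m := by linear_combination h2 - u * h1
    linarith
  constructor
  · by_contra h
    push Not at h
    nlinarith
  · by_contra h
    push Not at h
    nlinarith

/-- eigenvalue comparison -/
lemma eig_le {α β u v m x y x' y' : ℝ} (hα : 0 ≤ α) (hα1 : α ≤ 1) (hβ : 0 ≤ β) (hβ1 : β ≤ 1)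
    (hu : 0 ≤ u) (hv : 0 ≤ v) (hm : 0 ≤ m)
    (hy : 0 ≤ y) (hyx : y ≤ x) (h1 : x + y = α * u + β * v)
    (h2 : x * y = α * u * (β * v) - α * β * m)
    (hy' : 0 ≤ y') (hyx' : y' ≤ x') (h1' : x' + y' = u + v) (h2' : x' * y' = u * v - m) :
    x ≤ x' ∧ y ≤ y' := by
  obtain ⟨a1, a2⟩ := le_of_quad hyx' h1' h2' hm
  obtain ⟨b1, b2⟩ := le_of_quad (u := v) (v := u) hyx' (by linarith) (by linarith) hm
  have hab : 0 ≤ α * β := mul_nonneg hα hβ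
  obtain ⟨c1, c2⟩ := le_of_quad (u := α * u) (v := β * v) hyx h1 h2 (by positivity)
  obtain ⟨d1, d2⟩ := le_of_quad (u := β * v) (v := α * u) hyx (by linarith) (by linarith)
    (by positivity : 0 ≤ α * β * m)
  have chi : ∀ t : ℝ, (t - x) * (t - y) = (t - α * u) * (t - β * v) - α * β * m := by
    intro t; linear_combination h2 - t * h1
  have chi' : ∀ t : ℝ, (t - x') * (t - y') = (t - u) * (t - v) - m := by
    intro t; linear_combination h2' - t * h1'
  constructor
  · by_contra h
    push Not at h
    -- at t = x', positive
    have e := chi' x'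
    rw [sub_self, zero_mul] at e
    have f := chi x
    rw [sub_self, zero_mul] at f
    have g1 : α * (x' - u) < x - α * u := by nlinarith
    have g2 : β * (x' - v) < x - β * v := by nlinarith
    have g3 : 0 ≤ α * (x' - u) := mul_nonneg hα (by linarith)
    have g4 : 0 ≤ β * (x' - v) := mul_nonneg hβ (by linarith)
    have g5 : (α * (x' - u)) * (β * (x' - v)) < (x - α * u) * (x - β * v) :=
      mul_lt_mul'' g1 g2 g3 g4
    have g6 : (α * (x' - u)) * (β * (x' - v)) = α * β * m := by
      linear_combination (-(α * β)) * e
    linarith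
  · by_contra h
    push Not at h
    have e := chi' y'
    rw [sub_self, mul_zero] at e
    have f := chi y
    rw [sub_self, mul_zero] at f
    have hpos : 0 < (y' - x) * (y' - y) := by
      apply mul_pos_of_neg_of_neg <;> linarith
    have f' := chi y'
    have g1 : α * u - y' ≤ α * (u - y') := by nlinarith
    have g2 : β * v - y' ≤ β * (v - y') := by nlinarith
    have g5 : (α * u - y') * (β * v - y') ≤ (α * (u - y')) * (β * (v - y')) :=
      mul_le_mul g1 g2 (by linarith) (mul_nonneg hα (by linarith))
    have g6 : (α * (u - y')) * (β * (v - y')) = α * β * m := by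
      linear_combination (-(α * β)) * e
    nlinarith

lemma partA (pH pV : ℝ) (hH0 : 0 ≤ pH) (hV0 : 0 ≤ pV) (hH : pH ≤ 1/2) (hV : pV ≤ 1/2)
    (ρ : Matrix (Fin 2) (Fin 2) ℂ) (hρ : ρ.PosSemidef) (htr : ρ.trace = 1) :
    vnEnt (GammaPDL pH pV ρ) - vnEnt (GammaPDLc pH pV ρ) ≤ 0 := by
  have ha := hρ.diag_nonneg (i := 0)
  have hb := hρ.diag_nonneg (i := 1)
  have hdet := hρ.det_nonneg
  have hc : ρ 1 0 = star (ρ 0 1) := (hρ.1.apply 1 0).symm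
  obtain ⟨a, ha0, hae⟩ : ∃ a : ℝ, 0 ≤ a ∧ ρ 0 0 = a :=
    ⟨(ρ 0 0).re, (Complex.le_def.1 ha).1, by
      apply Complex.ext <;> simp; exact (Complex.le_def.1 ha).2.symm⟩
  obtain ⟨b, hb0, hbe⟩ : ∃ a : ℝ, 0 ≤ a ∧ ρ 1 1 = a :=
    ⟨(ρ 1 1).re, (Complex.le_def.1 hb).1, by
      apply Complex.ext <;> simp; exact (Complex.le_def.1 hb).2.symm⟩
  obtain ⟨c, hce⟩ : ∃ c, ρ 0 1 = c := ⟨_, rfl⟩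
  have hcc : c * star c = ((Complex.normSq c : ℝ) : ℂ) := Complex.mul_conj c
  obtain ⟨m, hm⟩ : ∃ m, Complex.normSq c = m := ⟨_, rfl⟩
  have hm0 : 0 ≤ m := hm ▸ Complex.normSq_nonneg c
  rw [hm] at hcc
  rw [hce] at hc
  rw [Matrix.det_fin_two, hae, hbe, hce, hc, hcc] at hdet
  have hd : m ≤ a * b := by
    have : (0:ℂ) ≤ ((a * b - m : ℝ) : ℂ) := by push_cast; exact hdet
    have := Complex.zero_le_real.1 this
    linarith
  have hab : a + b = 1 := by
    rw [Matrix.trace_fin_two, hae, hbe] at htr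
    exact_mod_cast htr
  have hs1 : ((√(pH * pV) : ℝ) : ℂ) * (√(pH * pV) : ℝ) = ((pH * pV : ℝ) : ℂ) := by
    rw [← Complex.ofReal_mul, Real.mul_self_sqrt (by positivity)]
  have hs2 : ((√((1 - pH) * (1 - pV)) : ℝ) : ℂ) * (√((1 - pH) * (1 - pV)) : ℝ)
      = (((1 - pH) * (1 - pV) : ℝ) : ℂ) := by
    rw [← Complex.ofReal_mul, Real.mul_self_sqrt (mul_nonneg (by linarith) (by linarith))]
  have qH : 0 < 1 - pH := by linarith
  have qV : 0 < 1 - pV := by linarith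
  obtain ⟨x, y, hy, hyx, h1, h2⟩ := exists_eig (pH * a) (pV * b) (pH * pV * m)
    (by positivity) (by positivity) (by positivity)
    (by have := mul_le_mul_of_nonneg_left hd (mul_nonneg hH0 hV0); nlinarith)
  obtain ⟨x', y', hy', hyx', h1', h2'⟩ := exists_eig ((1 - pH) * a) ((1 - pV) * b)
    ((1 - pH) * (1 - pV) * m)
    (by positivity) (by positivity) (by positivity)
    (by have := mul_le_mul_of_nonneg_left hd (mul_nonneg qH.le qV.le); nlinarith)
  have hh1 : (GammaPDL pH pV ρ).IsHermitian := by
    ext i j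
    fin_cases i <;> fin_cases j <;> simp [GammaPDL, hae, hbe, hce, hc, htr]
  have hh2 : (GammaPDLc pH pV ρ).IsHermitian := by
    ext i j
    fin_cases i <;> fin_cases j <;> simp [GammaPDLc, hae, hbe, hce, hc]
  have E1 : vnEnt (GammaPDL pH pV ρ) = Real.negMulLog x + Real.negMulLog y
      + Real.negMulLog (1 - pH * a - pV * b) := by
    apply vnEnt_blockA _ _ _ _ _ _ _ _ hh1
    · rw [hae, hbe]; exact_mod_cast h1
    · have : (x:ℂ) * y = pH * a * (pV * b) - ((pH * pV : ℝ) : ℂ) * (m : ℂ) := by exact_mod_cast h2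
      rw [this, hae, hbe, hce, hc, ← hs1, ← hcc]; ring
    · rw [htr, hae, hbe]; push_cast; ring
  have E2 : vnEnt (GammaPDLc pH pV ρ) = Real.negMulLog x' + Real.negMulLog y'
      + Real.negMulLog (pH * a + pV * b) := by
    apply vnEnt_blockB _ _ _ _ _ _ _ _ hh2
    · rw [hae, hbe]; exact_mod_cast h1'
    · have : (x':ℂ) * y' = ((1 - pH : ℝ) : ℂ) * a * (((1 - pV : ℝ) : ℂ) * b)
          - (((1 - pH) * (1 - pV) : ℝ) : ℂ) * (m : ℂ) := by exact_mod_cast h2'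
      rw [this, hae, hbe, hce, hc, ← hs2, ← hcc]; ring
    · rw [hae, hbe]; push_cast; ring
  have hle : x ≤ x' ∧ y ≤ y' := by
    refine eig_le (α := pH / (1 - pH)) (β := pV / (1 - pV)) (u := (1 - pH) * a)
      (v := (1 - pV) * b) (m := (1 - pH) * (1 - pV) * m) (by positivity)
      ((div_le_one qH).2 (by linarith)) (by positivity) ((div_le_one qV).2 (by linarith))
      (by positivity) (by positivity) (by positivity) hy hyx ?_ ?_ hy' hyx' h1' h2'
    · rw [h1]; field_simp
    · rw [h2]; field_simp
  have hH := Hcl_mono (hy.trans hyx) hy hle.1 hle.2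
  unfold Hcl at hH
  rw [h1, h1'] at hH
  have e3 : (1 - pH) * a + (1 - pV) * b = 1 - pH * a - pV * b := by linear_combination hab
  rw [e3] at hH
  rw [E1, E2]
  linarith

lemma Hcl_lower {x y : ℝ} (hy : 0 < y) (hx : 0 < x) :
    y * Real.log (x / y) ≤ Hcl y x := by
  unfold Hcl Real.negMulLog
  rw [Real.log_div hx.ne' hy.ne']
  have h1 := Real.log_le_log hx (by linarith : x ≤ y + x)
  nlinarith

lemma Hcl_upper {x y : ℝ} (hy : 0 < y) (hx : 0 ≤ x) (hxy : y + x ≤ 1) :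
    Hcl y x ≤ y * (1 - Real.log y) := by
  unfold Hcl Real.negMulLog
  have h0 : Real.log (y + x) ≤ 0 := Real.log_nonpos (by linarith) hxy
  have h1 : x * (Real.log (y + x) - Real.log x) ≤ y := by
    rcases hx.eq_or_lt with rfl | hx
    · simpa using hy.le
    · rw [← Real.log_div (by positivity) hx.ne']
      have := Real.log_le_sub_one_of_pos (x := (y + x) / x) (by positivity)
      calc _ ≤ x * ((y + x) / x - 1) := by gcongr
        _ = y := by field_simp; ring
  nlinarith

lemma scalarB (p r : ℝ) (hp : 1/2 < p) (hp1 : p ≤ 1) (hr : 0 < r) (hr1 : r ≤ 1) :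
    ∃ ε : ℝ, 0 < ε ∧ ε < 1 ∧
      0 < Hcl (p * ε) (r * (1 - ε)) - Hcl ((1 - p) * ε) ((1 - r) * (1 - ε)) := by
  have hp0 : 0 < p := by linarith
  set R := p * Real.log (r / (2 * p)) - (1 - p) * (1 - Real.log (1 - p)) with hR
  set K := 1 + |R| / (2 * p - 1) with hK
  have h2p : 0 < 2 * p - 1 := by linarith
  have hK1 : 1 ≤ K := by have : 0 ≤ |R| / (2 * p - 1) := by positivity
                         linarith
  have hKR : 0 < (2 * p - 1) * K + R := by
    have : (2 * p - 1) * K = (2 * p - 1) + |R| := by rw [hK]; field_simp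
    rw [this]
    have := neg_abs_le R
    linarith
  have hε0 : 0 < Real.exp (-K) := Real.exp_pos _
  have hε : Real.exp (-K) ≤ 1/2 := by
    have h1 : Real.exp (-K) ≤ Real.exp (-1) := Real.exp_le_exp.2 (by linarith)
    have h2 := Real.exp_neg_one_lt_half
    linarith
  have hlog : Real.log (Real.exp (-K)) = -K := Real.log_exp _
  generalize Real.exp (-K) = ε at *
  refine ⟨ε, hε0, by linarith, ?_⟩
  have hx : 0 < r * (1 - ε) := mul_pos hr (by linarith)
  have L := Hcl_lower (y := p * ε) (by positivity) hx
  have L2 : ε * (p * (Real.log (r / (2 * p)) + K)) ≤ p * ε * Real.log (r * (1 - ε) / (p * ε)) := by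
    have : Real.log (r / (2 * p)) + K = Real.log (r / (2 * p) / ε) := by
      rw [Real.log_div (by positivity) hε0.ne', hlog]; ring
    rw [this]
    have : Real.log (r / (2 * p) / ε) ≤ Real.log (r * (1 - ε) / (p * ε)) := by
      apply Real.log_le_log (by positivity)
      have : r / (2 * p) / ε = r * (1/2) / (p * ε) := by field_simp
      rw [this]
      gcongr
      linarith
    have := mul_le_mul_of_nonneg_left this (by positivity : 0 ≤ p * ε)
    linarith
  have U : Hcl ((1 - p) * ε) ((1 - r) * (1 - ε)) ≤
      ε * ((1 - p) * (1 - Real.log (1 - p) + K)) := by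
    rcases hp1.eq_or_lt with rfl | hp1
    · simp [Hcl]
    · have q : 0 < 1 - p := by linarith
      refine (Hcl_upper (by positivity) (mul_nonneg (by linarith) (by linarith)) ?_).trans ?_
      · nlinarith
      · rw [Real.log_mul q.ne' hε0.ne', hlog]
        apply le_of_eq; ring
  have : 0 < ε * ((2 * p - 1) * K + R) := mul_pos hε0 hKR
  rw [hR] at this
  nlinarith

lemma partB (pH pV a b : ℝ) (ha : 0 ≤ a) (hb : 0 ≤ b) (hab : a + b = 1)
    (h : 0 < Hcl (pH * a) (pV * b) - Hcl ((1 - pH) * a) ((1 - pV) * b)) :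
    ∃ ρ : Matrix (Fin 2) (Fin 2) ℂ, ρ.PosSemidef ∧ ρ.trace = 1 ∧
        0 < vnEnt (GammaPDL pH pV ρ) - vnEnt (GammaPDLc pH pV ρ) := by
  have habc : (a:ℂ) + b = 1 := by exact_mod_cast hab
  refine ⟨Matrix.diagonal ![(a:ℂ), (b:ℂ)], ?_, ?_, ?_⟩
  · apply Matrix.PosSemidef.diagonal
    intro i
    fin_cases i <;> simp [ha, hb]
  · simp [Matrix.trace_fin_two, habc]
  · set ρ := Matrix.diagonal ![(a:ℂ), (b:ℂ)] with hρ
    have e00 : ρ 0 0 = a := by simp [hρ]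
    have e11 : ρ 1 1 = b := by simp [hρ]
    have e01 : ρ 0 1 = 0 := by simp [hρ]
    have e10 : ρ 1 0 = 0 := by simp [hρ]
    have htr : ρ.trace = 1 := by simp [Matrix.trace_fin_two, e00, e11, habc]
    have hh1 : (GammaPDL pH pV ρ).IsHermitian := by
      ext i j
      fin_cases i <;> fin_cases j <;> simp [GammaPDL, e00, e11, e01, e10, htr]
    have hh2 : (GammaPDLc pH pV ρ).IsHermitian := by
      ext i j
      fin_cases i <;> fin_cases j <;> simp [GammaPDLc, e00, e11, e01, e10]
    have E1 : vnEnt (GammaPDL pH pV ρ) = Real.negMulLog (pH * a) + Real.negMulLog (pV * b)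
        + Real.negMulLog (1 - pH * a - pV * b) := by
      apply vnEnt_blockA _ _ _ _ _ _ _ _ hh1
      · rw [e00, e11]; push_cast; ring
      · rw [e00, e11, e01, e10]; push_cast; ring
      · rw [htr, e00, e11]; push_cast; ring
    have E2 : vnEnt (GammaPDLc pH pV ρ) = Real.negMulLog ((1 - pH) * a)
        + Real.negMulLog ((1 - pV) * b) + Real.negMulLog (pH * a + pV * b) := by
      apply vnEnt_blockB _ _ _ _ _ _ _ _ hh2
      · rw [e00, e11]; push_cast; ring
      · rw [e00, e11, e01, e10]; push_cast; ring
      · rw [e00, e11]; push_cast; ring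
    have e3 : (1 - pH) * a + (1 - pV) * b = 1 - pH * a - pV * b := by linear_combination hab
    unfold Hcl at h
    rw [e3] at h
    rw [E1, E2]
    linarith

/-- (a) if max(p_H, p_V) ≤ 1/2 the coherent information q(ρ) of the
generalized erasure channel of the polarization dependent loss operation is nonpositive on
all density matrices; (b) if max(p_H, p_V) > 1/2 and p_H, p_V > 0 then q(ρ) > 0 for some
density matrix ρ. -/
theorem pdl_coherent_information_sign (pH pV : ℝ)
    (hH : pH ∈ Set.Icc (0:ℝ) 1) (hV : pV ∈ Set.Icc (0:ℝ) 1) :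
    (max pH pV ≤ 1/2 →
      ∀ ρ : Matrix (Fin 2) (Fin 2) ℂ, ρ.PosSemidef → ρ.trace = 1 →
        vnEnt (GammaPDL pH pV ρ) - vnEnt (GammaPDLc pH pV ρ) ≤ 0) ∧
    (1/2 < max pH pV → 0 < pH → 0 < pV →
      ∃ ρ : Matrix (Fin 2) (Fin 2) ℂ, ρ.PosSemidef ∧ ρ.trace = 1 ∧
        0 < vnEnt (GammaPDL pH pV ρ) - vnEnt (GammaPDLc pH pV ρ)) := by
  obtain ⟨hH0, hH1⟩ := hH
  obtain ⟨hV0, hV1⟩ := hV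
  refine ⟨fun h ρ hρ htr => ?_, fun h hHp hVp => ?_⟩
  · exact partA pH pV hH0 hV0 ((le_max_left _ _).trans h) ((le_max_right _ _).trans h) ρ hρ htr
  · rcases lt_max_iff.1 h with h | h
    · obtain ⟨ε, h0, h1, hq⟩ := scalarB pH pV h hH1 hVp hV1
      exact partB pH pV ε (1 - ε) h0.le (by linarith) (by ring) hq
    · obtain ⟨ε, h0, h1, hq⟩ := scalarB pV pH h hV1 hHp hH1
      refine partB pH pV (1 - ε) ε (by linarith) h0.le (by ring) ?_
      rw [Hcl_comm, Hcl_comm ((1 - pH) * _)]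
      exact hq
end

section
/- Let p_H, p_V ∈ (0,1] with max(p_H, p_V) > 1/2, and let q(ρ) = S(Γ(ρ)) − S(Γ̃(ρ)) be the coherent information of the generalized erasure channel of the polarization dependent loss operation. Then the supremum of q over all 2×2 density matrices equals the supremum of q over diagonal density matrices: sup_{ρ density} q(ρ) = sup_{z ∈ [−1,1]} q(diag((1+z)/2, (1−z)/2)). -/
open Matrix ComplexOrder

noncomputable def l1 (t D : ℝ) : ℝ := (t + Real.sqrt (t^2 - 4*D))/2
noncomputable def l2 (t D : ℝ) : ℝ := (t - Real.sqrt (t^2 - 4*D))/2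
noncomputable def Phi (t D : ℝ) : ℝ :=
  Real.negMulLog (l1 t D) + Real.negMulLog (l2 t D) - Real.negMulLog t

lemma l_add (t D : ℝ) : l1 t D + l2 t D = t := by unfold l1 l2; ring
lemma l_mul (t D : ℝ) (h : 4*D ≤ t^2) : l1 t D * l2 t D = D := by
  unfold l1 l2
  have := Real.sq_sqrt (sub_nonneg.2 h)
  linear_combination (-1/4) * this

lemma key_ineq (x y : ℝ) (hy : 0 < y) (hyx : y ≤ x) :
    x * (Real.log (x + y) - Real.log x) ≤ y * (Real.log (x + y) - Real.log y) := by
  have hx : 0 < x := hy.trans_le hyx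
  have h1 : Real.log (x+y) - Real.log x ≤ y / x := by
    rw [← Real.log_div (by positivity) hx.ne']
    have := Real.log_le_sub_one_of_pos (show 0 < (x+y)/x by positivity)
    have e : (x+y)/x - 1 = y/x := by field_simp; ring
    linarith
  have h2 : 2 * (x - y) / (x + y) ≤ Real.log x - Real.log y := by
    rw [← Real.log_div hx.ne' hy.ne']
    have := Real.le_log_one_add_of_nonneg (show 0 ≤ (x-y)/y from div_nonneg (by linarith) hy.le)
    have e : 1 + (x-y)/y = x/y := by field_simp; ring
    rw [e] at this
    have e2 : 2 * ((x-y)/y) / ((x-y)/y + 2) = 2 * (x-y)/(x+y) := by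
      have : (x-y)/y + 2 = (x+y)/y := by field_simp; ring
      rw [this]; field_simp
    linarith
  have h3 : (x-y) * (y/x) ≤ y * (2 * (x - y) / (x + y)) := by
    rw [mul_div_assoc', mul_div_assoc', div_le_div_iff₀ hx (by positivity)]
    nlinarith [mul_nonneg (mul_nonneg hy.le (sub_nonneg.2 hyx)) (sub_nonneg.2 hyx)]
  have h4 := mul_le_mul_of_nonneg_left h1 (sub_nonneg.2 hyx)
  have h5 := mul_le_mul_of_nonneg_left h2 hy.le
  nlinarith

lemma psi_anti (D : ℝ) (hD : 0 < D) :
    AntitoneOn (fun x : ℝ => Real.negMulLog x + Real.negMulLog (D / x) - Real.negMulLog (x + D / x))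
      (Set.Ici (Real.sqrt D)) := by
  have hs : 0 < Real.sqrt D := Real.sqrt_pos.2 hD
  have hder : ∀ x : ℝ, Real.sqrt D ≤ x → HasDerivAt (fun x : ℝ => Real.negMulLog x + Real.negMulLog (D / x) - Real.negMulLog (x + D / x))
      ((-Real.log x - 1) + (-Real.log (D/x) - 1) * (-D/x^2) - (-Real.log (x + D/x) - 1) * (1 + -D/x^2)) x := by
    intro x hx
    have hx0 : 0 < x := hs.trans_le hx
    have hd : HasDerivAt (fun x : ℝ => D / x) (-D/x^2) x := by
      have := (hasDerivAt_inv hx0.ne').const_mul D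
      have e : -D/x^2 = D * -(x^2)⁻¹ := by ring
      rw [e]
      simpa only [div_eq_mul_inv] using this
    have hp : 0 < D / x := by positivity
    have a1 := Real.hasDerivAt_negMulLog hx0.ne'
    have a2 := (Real.hasDerivAt_negMulLog hp.ne').comp x hd
    have a3 := (Real.hasDerivAt_negMulLog (add_pos hx0 hp).ne').comp x ((hasDerivAt_id x).add hd)
    exact (a1.add a2).sub a3
  apply antitoneOn_of_deriv_nonpos (convex_Ici _)
  · exact fun x hx => (hder x hx).continuousAt.continuousWithinAt
  · intro x hx
    rw [interior_Ici] at hx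
    exact (hder x (le_of_lt hx)).differentiableAt.differentiableWithinAt
  · intro x hx
    rw [interior_Ici] at hx
    have hx' : Real.sqrt D ≤ x := le_of_lt hx
    rw [(hder x hx').deriv]
    have hx0 : 0 < x := hs.trans_le hx'
    have hDx : D ≤ x^2 := by
      rw [← Real.sq_sqrt hD.le]; gcongr
    have hk := key_ineq x (D/x) (by positivity) (by rw [div_le_iff₀ hx0]; nlinarith)
    set y := D/x with hy
    have e : -D/x^2 = -y/x := by rw [hy]; field_simp
    rw [e]
    have : ((-Real.log x - 1) + (-Real.log y - 1) * (-y/x) - (-Real.log (x + y) - 1) * (1 + -y/x))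
      = (x * (Real.log (x + y) - Real.log x) - y * (Real.log (x + y) - Real.log y))/x := by
      field_simp; ring
    rw [this]
    exact div_nonpos_of_nonpos_of_nonneg (by linarith) hx0.le

lemma Phi_anti (D t t' : ℝ) (hD : 0 ≤ D) (ht : 0 ≤ t) (htt : t ≤ t') (h : 4*D ≤ t^2) :
    Phi t' D ≤ Phi t D := by
  have h' : 4*D ≤ t'^2 := h.trans (by gcongr)
  rcases hD.eq_or_lt with rfl | hD
  · have : ∀ s : ℝ, 0 ≤ s → Phi s 0 = 0 := by
      intro s hs
      have e : Real.sqrt (s^2 - 4*0) = s := by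
        rw [mul_zero, sub_zero, Real.sqrt_sq hs]
      simp only [Phi, l1, l2, e]
      simp
    rw [this t ht, this t' (ht.trans htt)]
  · have hge : ∀ s : ℝ, 0 ≤ s → 4*D ≤ s^2 → Real.sqrt D ≤ l1 s D ∧
        Phi s D = (fun x : ℝ => Real.negMulLog x + Real.negMulLog (D / x) - Real.negMulLog (x + D / x)) (l1 s D) := by
      intro s hs hsD
      have h0 : Real.sqrt D ≤ s/2 := by
        rw [Real.sqrt_le_left (by linarith)]; nlinarith
      have h1 : Real.sqrt D ≤ l1 s D := by
        unfold l1; linarith [Real.sqrt_nonneg (s^2-4*D)]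
      have hp : 0 < l1 s D := (Real.sqrt_pos.2 hD).trans_le h1
      refine ⟨h1, ?_⟩
      have e : D / l1 s D = l2 s D := by
        rw [div_eq_iff hp.ne', mul_comm, l_mul _ _ hsD]
      simp only [e, l_add]; rfl
    obtain ⟨a, b⟩ := hge t ht h
    obtain ⟨c, d⟩ := hge t' (ht.trans htt) h'
    rw [b, d]
    apply psi_anti D hD a c
    unfold l1
    have : Real.sqrt (t^2-4*D) ≤ Real.sqrt (t'^2-4*D) := Real.sqrt_le_sqrt (by nlinarith)
    linarith

lemma vnEnt_eq (M : Matrix (Fin 3) (Fin 3) ℂ) (hM : M.IsHermitian) (x y z : ℝ)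
    (h : M.charpoly = (Polynomial.X - Polynomial.C (x:ℂ)) * (Polynomial.X - Polynomial.C (y:ℂ))
      * (Polynomial.X - Polynomial.C (z:ℂ))) :
    vnEnt M = Real.negMulLog x + Real.negMulLog y + Real.negMulLog z := by
  have h1 := hM.roots_charpoly_eq_eigenvalues
  have h2 : M.charpoly.roots = {(x:ℂ), (y:ℂ), (z:ℂ)} := by
    rw [h]
    have := Polynomial.roots_multiset_prod_X_sub_C ({(x:ℂ), (y:ℂ), (z:ℂ)} : Multiset ℂ)
    simpa [mul_assoc] using this
  rw [h2] at h1
  have h3 := congrArg (fun s : Multiset ℂ => (s.map (fun c => Real.negMulLog c.re)).sum) h1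
  simp only [vnEnt, dif_pos hM]
  simp [Real.negMulLog, Fin.sum_univ_three] at h3 ⊢
  linarith

lemma charpoly_blk1 (A B P R E u v : ℂ) (h1 : u + v = A + B) (h2 : u * v = A * B - P * R) :
    (!![A, P, 0; R, B, 0; 0, 0, E] : Matrix (Fin 3) (Fin 3) ℂ).charpoly =
    (Polynomial.X - Polynomial.C u) * (Polynomial.X - Polynomial.C v)
      * (Polynomial.X - Polynomial.C E) := by
  rw [Matrix.charpoly, Matrix.det_fin_three]
  have c1 := congrArg (Polynomial.C) h1
  have c2 := congrArg (Polynomial.C) h2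
  simp only [Polynomial.C_add, Polynomial.C_sub, Polynomial.C_mul] at c1 c2
  simp [Matrix.charmatrix_apply]
  linear_combination (Polynomial.X - Polynomial.C E) * (Polynomial.X * c1 - c2)

lemma charpoly_blk2 (A B P R E u v : ℂ) (h1 : u + v = A + B) (h2 : u * v = A * B - P * R) :
    (!![E, 0, 0; 0, A, P; 0, R, B] : Matrix (Fin 3) (Fin 3) ℂ).charpoly =
    (Polynomial.X - Polynomial.C u) * (Polynomial.X - Polynomial.C v)
      * (Polynomial.X - Polynomial.C E) := by
  rw [Matrix.charpoly, Matrix.det_fin_three]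
  have c1 := congrArg (Polynomial.C) h1
  have c2 := congrArg (Polynomial.C) h2
  simp only [Polynomial.C_add, Polynomial.C_sub, Polynomial.C_mul] at c1 c2
  simp [Matrix.charmatrix_apply]
  linear_combination (Polynomial.X - Polynomial.C E) * (Polynomial.X * c1 - c2)

lemma ent_G (pH pV a w : ℝ) (hH : pH ∈ Set.Ioc (0:ℝ) 1) (hV : pV ∈ Set.Ioc (0:ℝ) 1)
    (ρ : Matrix (Fin 2) (Fin 2) ℂ) (h00 : ρ 0 0 = (a:ℂ)) (h11 : ρ 1 1 = ((1 - a : ℝ):ℂ))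
    (h10 : ρ 1 0 = star (ρ 0 1)) (hw : Complex.normSq (ρ 0 1) = a*(1-a) - w)
    (t : ℝ) (ht : t = pH*a + pV*(1-a)) :
    4*(pH*pV*w) ≤ t^2 ∧ 4*((1-pH)*(1-pV)*w) ≤ (1-t)^2 ∧
    vnEnt (GammaPDL pH pV ρ) - vnEnt (GammaPDLc pH pV ρ)
      = Phi t (pH*pV*w) - Phi (1-t) ((1-pH)*(1-pV)*w) := by
  obtain ⟨hH0, hH1⟩ := hH
  obtain ⟨hV0, hV1⟩ := hV
  have hn := Complex.normSq_nonneg (ρ 0 1)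
  have hα : 0 ≤ pH*pV := by positivity
  have hβ : 0 ≤ (1-pH)*(1-pV) := mul_nonneg (by linarith) (by linarith)
  have d1 : 4*(pH*pV*w) ≤ t^2 := by
    subst ht
    have := mul_nonneg hα hn
    rw [hw] at this
    nlinarith [sq_nonneg (pH*a - pV*(1-a))]
  have d2 : 4*((1-pH)*(1-pV)*w) ≤ (1-t)^2 := by
    subst ht
    have := mul_nonneg hβ hn
    rw [hw] at this
    nlinarith [sq_nonneg ((1-pH)*a - (1-pV)*(1-a))]
  refine ⟨d1, d2, ?_⟩
  have hc : ρ 0 1 * star (ρ 0 1) = ((a*(1-a) - w : ℝ) : ℂ) := by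
    rw [← hw]; exact Complex.mul_conj _
  have s1 : ((Real.sqrt (pH*pV) : ℝ):ℂ)^2 = ((pH*pV:ℝ):ℂ) := by
    rw [← Complex.ofReal_pow, Real.sq_sqrt hα]
  have s2 : ((Real.sqrt ((1-pH)*(1-pV)) : ℝ):ℂ)^2 = (((1-pH)*(1-pV):ℝ):ℂ) := by
    rw [← Complex.ofReal_pow, Real.sq_sqrt hβ]
  have hG : vnEnt (GammaPDL pH pV ρ) = Real.negMulLog (l1 t (pH*pV*w)) +
      Real.negMulLog (l2 t (pH*pV*w)) + Real.negMulLog (1-t) := by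
    apply vnEnt_eq
    · ext i j
      fin_cases i <;> fin_cases j <;>
        simp [GammaPDL, h00, h11, h10, Matrix.trace, Fin.sum_univ_two]
    · have E : ((1 - t : ℝ):ℂ) = ρ.trace - (pH : ℂ) * ρ 0 0 - (pV : ℂ) * ρ 1 1 := by
        rw [ht, Matrix.trace_fin_two, h00, h11]; push_cast; ring
      rw [E]
      apply charpoly_blk1
      · rw [← Complex.ofReal_add, l_add, ht, h00, h11]; push_cast; ring
      · rw [← Complex.ofReal_mul, l_mul _ _ d1, h00, h11, h10]
        push_cast at s1 hc ⊢
        linear_combination (ρ 0 1 * star (ρ 0 1)) * s1 + (pH*pV:ℂ) * hc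
  have hG2 : vnEnt (GammaPDLc pH pV ρ) = Real.negMulLog (l1 (1-t) ((1-pH)*(1-pV)*w)) +
      Real.negMulLog (l2 (1-t) ((1-pH)*(1-pV)*w)) + Real.negMulLog t := by
    apply vnEnt_eq
    · ext i j
      fin_cases i <;> fin_cases j <;>
        simp [GammaPDLc, h00, h11, h10]
    · have E : ((t : ℝ):ℂ) = (pH : ℂ) * ρ 0 0 + (pV : ℂ) * ρ 1 1 := by
        rw [ht, h00, h11]; push_cast; ring
      rw [E]
      apply charpoly_blk2
      · rw [← Complex.ofReal_add, l_add, ht, h00, h11]; push_cast; ring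
      · rw [← Complex.ofReal_mul, l_mul _ _ d2, h00, h11, h10]
        push_cast at s2 hc ⊢
        linear_combination (ρ 0 1 * star (ρ 0 1)) * s2 + ((1-pH)*(1-pV):ℂ) * hc
  rw [hG, hG2, Phi, Phi]
  ring

lemma exists_a (pH pV a w : ℝ) (hw : 0 ≤ w) (h : w ≤ a*(1-a)) :
    ∃ a' : ℝ, 0 ≤ a' ∧ a' ≤ 1 ∧ a' * (1-a') = w ∧ pH*a' + pV*(1-a') ≤ pH*a+pV*(1-a) := by
  have h4 : 0 ≤ 1 - 4*w := by nlinarith [sq_nonneg (2*a-1)]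
  have hs := Real.sq_sqrt h4
  have hs0 := Real.sqrt_nonneg (1-4*w)
  have hs1 : Real.sqrt (1-4*w) ≤ 1 := by
    rw [Real.sqrt_le_left (by norm_num)]; linarith
  have ha : |2*a-1| ≤ Real.sqrt (1-4*w) := Real.abs_le_sqrt (by nlinarith)
  obtain ⟨ha1, ha2⟩ := abs_le.1 ha
  rcases le_total pV pH with hp | hp
  · exact ⟨(1 - Real.sqrt (1-4*w))/2, by linarith, by linarith, by nlinarith, by nlinarith⟩
  · exact ⟨(1 + Real.sqrt (1-4*w))/2, by linarith, by linarith, by nlinarith, by nlinarith⟩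

/-- for p_H, p_V ∈ (0,1] with max(p_H,p_V) > 1/2, the supremum of the
coherent information q over all 2×2 density matrices equals the supremum of q over the
diagonal density matrices diag((1+z)/2, (1−z)/2), z ∈ [−1,1]. -/
theorem pdl_coherent_information_diagonal_sup (pH pV : ℝ)
    (hH : pH ∈ Set.Ioc (0:ℝ) 1) (hV : pV ∈ Set.Ioc (0:ℝ) 1)
    (hmax : 1/2 < max pH pV) :
    sSup {x : ℝ | ∃ ρ : Matrix (Fin 2) (Fin 2) ℂ, ρ.PosSemidef ∧ ρ.trace = 1 ∧
        x = vnEnt (GammaPDL pH pV ρ) - vnEnt (GammaPDLc pH pV ρ)}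
      = sSup {x : ℝ | ∃ z ∈ Set.Icc (-1 : ℝ) 1,
        x = vnEnt (GammaPDL pH pV !![(((1 + z) / 2 : ℝ) : ℂ), 0; 0, (((1 - z) / 2 : ℝ) : ℂ)])
          - vnEnt (GammaPDLc pH pV
              !![(((1 + z) / 2 : ℝ) : ℂ), 0; 0, (((1 - z) / 2 : ℝ) : ℂ)])} := by
  apply csSup_eq_csSup_of_forall_exists_le
  · rintro x ⟨ρ, hρ, htr, rfl⟩
    obtain ⟨a, ha0, h00⟩ : ∃ a : ℝ, 0 ≤ a ∧ ρ 0 0 = (a:ℂ) := by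
      have := hρ.diag_nonneg (i := 0)
      rw [Complex.le_def] at this
      exact ⟨(ρ 0 0).re, this.1, Complex.ext rfl this.2.symm⟩
    have h11 : ρ 1 1 = ((1 - a : ℝ):ℂ) := by
      rw [Matrix.trace_fin_two, h00] at htr
      push_cast
      linear_combination htr
    have h10 : ρ 1 0 = star (ρ 0 1) := (hρ.1.apply 1 0).symm
    have hdet := hρ.det_nonneg
    have hdet' : ρ.det = ((a*(1-a) - Complex.normSq (ρ 0 1) : ℝ):ℂ) := by
      have := Complex.mul_conj (ρ 0 1)
      rw [Matrix.det_fin_two, h00, h11, h10]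
      push_cast
      rw [← this]; rfl
    rw [hdet'] at hdet
    have hw0 : 0 ≤ a*(1-a) - Complex.normSq (ρ 0 1) := by exact_mod_cast hdet
    have hb0 : 0 ≤ 1 - a := by
      have := hρ.diag_nonneg (i := 1)
      rw [h11] at this
      exact_mod_cast this
    set w := a*(1-a) - Complex.normSq (ρ 0 1) with hwdef
    have hwle : w ≤ a*(1-a) := by
      have := Complex.normSq_nonneg (ρ 0 1); linarith
    obtain ⟨a', h0, h1, haw, hle⟩ := exists_a pH pV a w hw0 hwle
    refine ⟨_, ⟨2*a'-1, ⟨by linarith, by linarith⟩, rfl⟩, ?_⟩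
    have ez : (1 + (2*a'-1))/2 = a' := by ring
    have ez2 : (1 - (2*a'-1))/2 = 1 - a' := by ring
    rw [ez, ez2]
    obtain ⟨p1, p2, p3⟩ := ent_G pH pV a w hH hV ρ h00 h11 h10 (by rw [hwdef]; ring) _ rfl
    obtain ⟨r1, r2, r3⟩ := ent_G pH pV a' w hH hV !![((a' : ℝ) : ℂ), 0; 0, ((1 - a' : ℝ) : ℂ)]
      (by simp) (by simp) (by simp) (by simp [haw]) _ rfl
    rw [p3, r3]
    obtain ⟨hH0, hH1⟩ := hH
    obtain ⟨hV0, hV1⟩ := hV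
    have q1 := Phi_anti (pH*pV*w) _ _ (by positivity)
      (add_nonneg (mul_nonneg hH0.le h0) (mul_nonneg hV0.le (by linarith))) hle r1
    have q2 := Phi_anti ((1-pH)*(1-pV)*w) (1 - (pH*a+pV*(1-a))) (1 - (pH*a'+pV*(1-a')))
      (mul_nonneg (mul_nonneg (by linarith) (by linarith)) hw0)
      (by nlinarith) (by linarith) p2
    linarith
  · rintro y ⟨z, hz, rfl⟩
    refine ⟨_, ⟨_, ?_, ?_, rfl⟩, le_rfl⟩
    · have e : (!![(((1 + z) / 2 : ℝ) : ℂ), 0; 0, (((1 - z) / 2 : ℝ) : ℂ)] : Matrix (Fin 2) (Fin 2) ℂ)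
          = Matrix.diagonal ![(((1 + z) / 2 : ℝ) : ℂ), (((1 - z) / 2 : ℝ) : ℂ)] := by
        ext i j; fin_cases i <;> fin_cases j <;> simp
      rw [e, Matrix.posSemidef_diagonal_iff]
      have z1 : 0 ≤ (1+z)/2 := by linarith [hz.1]
      have z2 : 0 ≤ (1-z)/2 := by linarith [hz.2]
      intro i
      fin_cases i
      · exact Complex.zero_le_real.2 z1
      · exact Complex.zero_le_real.2 z2
    · rw [Matrix.trace_fin_two]
      simp
      ring
end
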